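/- arXiv:1901.08395 — 3 statements merged into one kernel-verified Lean document; each statement's English description precedes it below -/
import Mathlib

section
/- Let U be a contractible open subset of ℂ and let b : U → ℂ⁴ be a real analytic map such that b(z) ≠ 0 and b(z)ᵀ I₁,₃ b(z) = 0 for all z ∈ U. Then there exists a real analytic map A : U → SO⁺(1,3) such that for every z ∈ U the vector A(z)·b(z) lies in the two-dimensional complex subspace spanned by (1,−1,0,0)ᵀ and (0,0,1,i)ᵀ, i.e. A(z)·b(z) has the form (p(z), −p(z), q(z), i q(z))ᵀ for some functions p, q : U → ℂ. (Lemma 4.1 of the paper.) -/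
open Matrix Complex

noncomputable section

/-- The diagonal matrix `diag(-1,1,1,1)` over `ℝ`. -/
def I13 : Matrix (Fin 4) (Fin 4) ℝ := Matrix.diagonal ![-1, 1, 1, 1]

/-- The diagonal matrix `diag(-1,1,1,1)` over `ℂ`. -/
def I13C : Matrix (Fin 4) (Fin 4) ℂ := Matrix.diagonal ![-1, 1, 1, 1]

/-- `SO⁺(1,3)`: real 4×4 matrices with `Aᵀ I₁,₃ A = I₁,₃`, `det A = 1`, `A₀₀ > 0`. -/
def SOplus13 (A : Matrix (Fin 4) (Fin 4) ℝ) : Prop :=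
  Aᵀ * I13 * A = I13 ∧ A.det = 1 ∧ 0 < A 0 0


lemma analytic_sum_prod_aux {ι V : Type*} [NormedAddCommGroup V] [InnerProductSpace ℂ V]
    [CompleteSpace V] (e : ι → V) (he : ∀ n, ‖e n‖ = 1)
    (hee : ∀ n m, n ≠ m → inner ℂ (e n) (e m) = 0) (a b : ι → ℂ → ℂ) (ha : ∀ n, Differentiable ℂ (a n))
    (hb : ∀ n, Differentiable ℂ (b n)) (u : ι → ℝ) (hu : Summable u) (z₀ : ℂ) (η : ℝ) (hη : 0 < η)
    (hau : ∀ n, ∀ X ∈ Metric.ball (z₀.re : ℂ) η, ‖a n X‖ ≤ u n)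
    (hbu : ∀ n, ∀ X ∈ Metric.ball (z₀.im : ℂ) η, ‖b n X‖ ≤ u n) :
    AnalyticAt ℝ (fun z : ℂ => ∑' n, a n (z.re : ℂ) * b n (z.im : ℂ)) z₀ := by
  classical
  have hφ : ∀ n, ‖innerSL ℂ (e n)‖ ≤ 1 := fun n => by
    rw [innerSL_apply_norm, he]
  let A : ℂ → (V →L[ℂ] ℂ) := fun X => ∑' n, a n X • innerSL ℂ (e n)
  let B : ℂ → V := fun X => ∑' n, b n X • e n
  have hau' : ∀ n, ∀ X ∈ Metric.ball (z₀.re : ℂ) η, ‖a n X • innerSL ℂ (e n)‖ ≤ u n := by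
    intro n X hX
    rw [norm_smul]
    calc _ ≤ ‖a n X‖ * 1 := by gcongr; exact hφ n
      _ ≤ _ := by rw [mul_one]; exact hau n X hX
  have hbu' : ∀ n, ∀ X ∈ Metric.ball (z₀.im : ℂ) η, ‖b n X • e n‖ ≤ u n := by
    intro n X hX
    rw [norm_smul, he, mul_one]; exact hbu n X hX
  have hA : DifferentiableOn ℂ A (Metric.ball (z₀.re : ℂ) η) :=
    Complex.differentiableOn_tsum_of_summable_norm hu
      (fun n => ((ha n).smul_const _).differentiableOn) Metric.isOpen_ball hau'
  have hB : DifferentiableOn ℂ B (Metric.ball (z₀.im : ℂ) η) :=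
    Complex.differentiableOn_tsum_of_summable_norm hu
      (fun n => ((hb n).smul_const _).differentiableOn) Metric.isOpen_ball hbu'
  have hA1 : AnalyticAt ℝ A (z₀.re : ℂ) :=
    (hA.analyticAt (Metric.isOpen_ball.mem_nhds (Metric.mem_ball_self hη))).restrictScalars
  have hB1 : AnalyticAt ℝ B (z₀.im : ℂ) :=
    (hB.analyticAt (Metric.isOpen_ball.mem_nhds (Metric.mem_ball_self hη))).restrictScalars
  have hre : AnalyticAt ℝ (fun z : ℂ => (z.re : ℂ)) z₀ :=
    (Complex.ofRealCLM.comp Complex.reCLM).analyticAt z₀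
  have him : AnalyticAt ℝ (fun z : ℂ => (z.im : ℂ)) z₀ :=
    (Complex.ofRealCLM.comp Complex.imCLM).analyticAt z₀
  have hA2 : AnalyticAt ℝ (fun z : ℂ => A (z.re : ℂ)) z₀ := hA1.fun_comp_of_eq hre rfl
  have hB2 : AnalyticAt ℝ (fun z : ℂ => B (z.im : ℂ)) z₀ := hB1.fun_comp_of_eq him rfl
  let T : (V →L[ℂ] ℂ) →L[ℝ] V →L[ℝ] ℂ := ContinuousLinearMap.restrictScalarsL ℂ V ℂ ℝ ℝ
  have hT : AnalyticAt ℝ (fun z : ℂ => T (A (z.re : ℂ)) (B (z.im : ℂ))) z₀ :=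
    (T.analyticAt_bilinear (A (z₀.re : ℂ), B (z₀.im : ℂ))).comp₂ hA2 hB2
  refine hT.congr ?_
  have c1 : ∀ᶠ z : ℂ in nhds z₀, (z.re : ℂ) ∈ Metric.ball (z₀.re : ℂ) η :=
    hre.continuousAt.eventually (Metric.isOpen_ball.mem_nhds (Metric.mem_ball_self hη))
  have c2 : ∀ᶠ z : ℂ in nhds z₀, (z.im : ℂ) ∈ Metric.ball (z₀.im : ℂ) η :=
    him.continuousAt.eventually (Metric.isOpen_ball.mem_nhds (Metric.mem_ball_self hη))
  filter_upwards [c1, c2] with z h1 h2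
  have sA : Summable (fun n => a n z.re • innerSL ℂ (e n)) :=
    Summable.of_norm_bounded hu (fun n => hau' n _ h1)
  have sB : Summable (fun n => b n z.im • e n) :=
    Summable.of_norm_bounded hu (fun n => hbu' n _ h2)
  have e1 : T (A (z.re : ℂ)) (B (z.im : ℂ)) = A (z.re : ℂ) (B (z.im : ℂ)) := rfl
  rw [e1]
  have e2 : A (z.re : ℂ) (B (z.im : ℂ)) = ∑' n, (a n z.re • innerSL ℂ (e n)) (B (z.im : ℂ)) :=
    ((ContinuousLinearMap.apply ℂ ℂ (B (z.im : ℂ))).map_tsum sA)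
  rw [e2]
  congr 1
  ext n
  have e3 : innerSL ℂ (e n) (B (z.im : ℂ)) = ∑' m, innerSL ℂ (e n) (b m z.im • e m) :=
    (innerSL ℂ (e n)).map_tsum sB
  rw [_root_.smul_apply, e3, tsum_eq_single n]
  · simp [he]
  · intro m hm
    simp [hee n m hm.symm]

lemma analytic_sum_prod {ι : Type*} (a b : ι → ℂ → ℂ) (ha : ∀ n, Differentiable ℂ (a n))
    (hb : ∀ n, Differentiable ℂ (b n)) (u : ι → ℝ) (hu : Summable u) (z₀ : ℂ) (η : ℝ) (hη : 0 < η)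
    (hau : ∀ n, ∀ X ∈ Metric.ball (z₀.re : ℂ) η, ‖a n X‖ ≤ u n)
    (hbu : ∀ n, ∀ X ∈ Metric.ball (z₀.im : ℂ) η, ‖b n X‖ ≤ u n) :
    AnalyticAt ℝ (fun z : ℂ => ∑' n, a n (z.re : ℂ) * b n (z.im : ℂ)) z₀ := by
  classical
  refine analytic_sum_prod_aux (V := lp (fun _ : ι => ℂ) 2) (fun n => lp.single 2 n (1 : ℂ))
    (fun n => ?_) (fun n m h => ?_) a b ha hb u hu z₀ η hη hau hbu
  · rw [lp.norm_single (by norm_num)]; simp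
  · rw [lp.inner_single_left]
    simp [lp.single_apply, Pi.single_apply, h]

lemma exists_cont_section {X E : Type*} [MetricSpace X] [ContractibleSpace X]
    [NormedAddCommGroup E] [NormedSpace ℂ E] (P : X → E →L[ℂ] E) (hP : Continuous P)
    (hPP : ∀ x v, P x (P x v) = P x v) (hP0 : ∀ x, P x ≠ 0) :
    ∃ k : X → E, Continuous k ∧ ∀ x, k x ≠ 0 ∧ P x (k x) = k x := by
  obtain ⟨y, ⟨H₀⟩⟩ := id_nullhomotopic X
  let H := H₀.symm
  let G : X → C(unitInterval, E →L[ℂ] E) := fun x =>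
    ⟨fun t => P (H (t, x)), by fun_prop⟩
  have hG : Continuous G := by
    apply ContinuousMap.continuous_of_continuous_uncurry
    show Continuous (fun p : X × unitInterval => P (H (p.2, p.1)))
    fun_prop
  obtain ⟨δ, hδ⟩ := exists_continuous_forall_mem_convex_of_local_const (X := X) (E := ℝ)
    (t := fun x => {d : ℝ | 0 < d ∧ ∀ s t : unitInterval, |(s : ℝ) - t| ≤ d →
      ‖G x s - G x t‖ < 1}) (by
      intro x
      apply Set.OrdConnected.convex
      constructor
      rintro d1 ⟨h1, _⟩ d2 ⟨_, h2⟩ d ⟨hd1, hd2⟩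
      exact ⟨h1.trans_le hd1, fun s t hst => h2 s t (hst.trans hd2)⟩) (by
      intro x
      have huc : UniformContinuous (G x) := CompactSpace.uniformContinuous_of_continuous (G x).continuous
      obtain ⟨d, hd, hd'⟩ := Metric.uniformContinuous_iff.1 huc (1/3) (by norm_num)
      refine ⟨d / 2, ?_⟩
      have := hG.continuousAt (x := x) (Metric.ball_mem_nhds (G x) (ε := 1/3) (by norm_num))
      filter_upwards [this] with x' hx'
      refine ⟨by positivity, fun s t hst => ?_⟩
      rw [← dist_eq_norm]
      have hx'' : dist (G x') (G x) < 1/3 := hx'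
      have a1 := (ContinuousMap.dist_apply_le_dist (f := G x') (g := G x) s).trans_lt hx''
      have a2 := (ContinuousMap.dist_apply_le_dist (f := G x') (g := G x) t).trans_lt hx''
      have a3 : dist (G x s) (G x t) < 1/3 := hd' (by
        rw [Subtype.dist_eq, Real.dist_eq]; linarith)
      have a4 := dist_triangle4 (G x' s) (G x s) (G x t) (G x' t)
      rw [dist_comm (G x t)] at a4
      linarith)
  obtain ⟨w, hw⟩ : ∃ w, P y w ≠ 0 := by
    by_contra! h
    exact hP0 y (by ext v; simp [h])
  let τ : ℕ → X → unitInterval := fun j x => Set.projIcc 0 1 zero_le_one (j * δ x)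
  have hτ : ∀ j, Continuous (τ j) := fun j => by
    apply continuous_projIcc.comp; fun_prop
  let K : ℕ → X → E := fun j => Nat.rec (fun _ => P y w) (fun j f x => G x (τ (j+1) x) (f x)) j
  have K0 : ∀ x, K 0 x = P y w := fun x => rfl
  have Ks : ∀ j x, K (j+1) x = G x (τ (j+1) x) (K j x) := fun j x => rfl
  have hKc : ∀ j, Continuous (K j) := by
    intro j
    induction j with
    | zero => exact continuous_const
    | succ j ih =>
      have : Continuous (fun x => P (H (τ (j+1) x, x)) (K j x)) := by
        have := hτ (j+1)
        fun_prop
      exact this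
  have hK : ∀ j x, K j x ≠ 0 ∧ G x (τ j x) (K j x) = K j x := by
    intro j x
    induction j with
    | zero =>
      have : G x (τ 0 x) = P y := by
        show P (H (Set.projIcc 0 1 zero_le_one (((0:ℕ):ℝ) * δ x), x)) = P y
        simp
      rw [K0, this, hPP]
      exact ⟨hw, rfl⟩
    | succ j ih =>
      rw [Ks]
      refine ⟨fun h0 => ?_, hPP _ _⟩
      have h1 : ‖G x (τ j x) - G x (τ (j+1) x)‖ < 1 := by
        apply (hδ x).2
        refine (Set.abs_projIcc_sub_projIcc _).trans ?_
        push_cast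
        rw [show (j:ℝ) * δ x - (j+1) * δ x = - δ x by ring, abs_neg, abs_of_pos (hδ x).1]
      have h2 : (G x (τ j x) - G x (τ (j+1) x)) (K j x) = K j x := by
        rw [_root_.sub_apply, h0, ih.2, sub_zero]
      have h3 := (G x (τ j x) - G x (τ (j+1) x)).le_opNorm (K j x)
      rw [h2] at h3
      have : 0 < ‖K j x‖ := norm_pos_iff.2 ih.1
      nlinarith
  have hτ1 : ∀ (j : ℕ) x, 1 ≤ j * δ x → τ j x = 1 := fun j x h => Set.projIcc_of_right_le _ h
  have hst : ∀ (i j : ℕ) x, 1 ≤ i * δ x → i ≤ j → K j x = K i x := by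
    intro i j x hi hij
    induction j, hij using Nat.le_induction with
    | base => rfl
    | succ j hj ih =>
      have hj1 : 1 ≤ (j:ℝ) * δ x := hi.trans (by have := (hδ x).1; gcongr)
      have hj2 : 1 ≤ ((j+1 : ℕ):ℝ) * δ x := hj1.trans (by have := (hδ x).1; gcongr; simp)
      rw [← ih, Ks, hτ1 _ _ hj2, ← hτ1 _ _ hj1, (hK j x).2]
  let N : X → ℕ := fun x => ⌈1 / δ x⌉₊
  have hN : ∀ x, 1 ≤ (N x) * δ x := fun x => by
    rw [← div_le_iff₀ (hδ x).1]; exact Nat.le_ceil _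
  refine ⟨fun x => K (N x) x, ?_, fun x => ⟨(hK _ x).1, ?_⟩⟩
  · rw [continuous_iff_continuousAt]
    intro x
    have hx := (hδ x).1
    have : ∀ᶠ x' in nhds x, δ x / 2 < δ x' :=
      δ.continuous.continuousAt.eventually (lt_mem_nhds (by linarith))
    obtain ⟨m, hm⟩ := exists_nat_ge (1 / (δ x / 2))
    refine (hKc m).continuousAt.congr ?_
    filter_upwards [this] with x' hx'
    apply hst _ _ _ (hN x')
    apply Nat.ceil_le.2 (le_trans _ hm)
    apply one_div_le_one_div_of_le (by linarith) hx'.le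
  · have h := (hK (N x) x).2
    rw [hτ1 _ _ (hN x)] at h
    have : G x 1 = P x := by
      show P (H (1, x)) = P x
      simp
    rwa [this] at h

lemma exists_ball_cover (U : Set ℂ) (hU : IsOpen U) (R : ℂ → ℝ) (hR : ∀ x ∈ U, 0 < R x)
    (hRU : ∀ x ∈ U, Metric.ball x (R x) ⊆ U) :
    ∃ (ι : Type) (_ : Countable ι) (s : ι → ℂ) (r r' : ι → ℝ),
      (∀ n, s n ∈ U ∧ 0 ≤ r n ∧ r n < r' n ∧ r' n < R (s n)) ∧
      (∀ z ∈ U, ∃ n, dist z (s n) ≤ r n) ∧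
      ∀ z ∈ U, ∃ ρ > 0, {n | (Metric.ball (s n) (r' n) ∩ Metric.ball z ρ).Nonempty}.Finite := by
  have : LocallyCompactSpace U := hU.locallyCompactSpace
  have : SigmaCompactSpace U := inferInstance
  have hB : ∀ x : U, (nhds x).HasBasis (fun t : ℝ => 0 < t ∧ t < R x) (fun t => Metric.ball x t) := by
    intro x
    refine Metric.nhds_basis_ball.to_hasBasis (fun i hi => ?_) (fun i hi => ⟨i, hi.1, le_rfl⟩)
    have := hR x x.2
    refine ⟨min i (R x / 2), ⟨by positivity, (min_le_right _ _).trans_lt (by linarith)⟩, ?_⟩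
    exact Metric.ball_subset_ball (min_le_left _ _)
  obtain ⟨α, c, r', hr', hcov, hlf⟩ := refinement_of_locallyCompact_sigmaCompact_of_nhds_basis hB
  obtain ⟨v, hv, hvo, hvc⟩ := exists_iUnion_eq_closure_subset
    (fun a => Metric.isOpen_ball) (fun x => hlf.point_finite x) hcov
  have hcnt : Countable α := by
    have := hlf.countable_univ (fun a => ⟨c a, Metric.mem_ball_self (hr' a).1⟩)
    exact Set.countable_univ_iff.1 this
  have hr : ∀ a, ∃ r, 0 ≤ r ∧ r < r' a ∧ ∀ x ∈ v a, dist (x : ℂ) (c a) ≤ r := by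
    intro a
    have hcb : Metric.closedBall (c a : ℂ) (r' a) ⊆ U :=
      (Metric.closedBall_subset_ball (hr' a).2).trans (hRU _ (c a).2)
    have hK : IsCompact (closure (v a)) := by
      have h1 : IsCompact (Metric.closedBall (c a) (r' a)) := by
        rw [Topology.IsEmbedding.subtypeVal.isCompact_iff]
        have : Subtype.val '' (Metric.closedBall (c a) (r' a)) = Metric.closedBall (c a : ℂ) (r' a) := by
          ext z
          constructor
          · rintro ⟨x, hx, rfl⟩; exact hx
          · intro hz; exact ⟨⟨z, hcb hz⟩, hz, rfl⟩
        rw [this]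
        exact isCompact_closedBall _ _
      exact h1.of_isClosed_subset isClosed_closure ((hvc a).trans Metric.ball_subset_closedBall)
    rcases (closure (v a)).eq_empty_or_nonempty with he | hne
    · refine ⟨0, le_rfl, (hr' a).1, fun x hx => ?_⟩
      have := subset_closure hx
      rw [he] at this
      exact this.elim
    · obtain ⟨x, hx, hm⟩ := hK.exists_isMaxOn hne
        (f := fun x : U => dist (x : ℂ) (c a)) (by fun_prop)
      refine ⟨dist (x : ℂ) (c a), dist_nonneg, hvc a hx, fun y hy => hm (subset_closure hy)⟩
  choose r hr0 hr1 hr2 using hr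
  refine ⟨α, hcnt, fun a => c a, r, r', fun n => ⟨(c n).2, hr0 n, hr1 n, (hr' n).2⟩, ?_, ?_⟩
  · intro z hz
    have : (⟨z, hz⟩ : U) ∈ ⋃ i, v i := by rw [hv]; trivial
    obtain ⟨n, hn⟩ := Set.mem_iUnion.1 this
    exact ⟨n, hr2 n _ hn⟩
  · intro z hz
    obtain ⟨t, ht, hf⟩ := hlf ⟨z, hz⟩
    obtain ⟨ρ, hρ, hρt⟩ := Metric.mem_nhds_iff.1 ht
    obtain ⟨ρ', hρ', hρU⟩ := Metric.isOpen_iff.1 hU z hz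
    refine ⟨min ρ ρ', by positivity, hf.subset ?_⟩
    rintro n ⟨y, hy1, hy2⟩
    have hyU : y ∈ U := hρU (Metric.ball_subset_ball (min_le_right _ _) hy2)
    refine ⟨⟨y, hyU⟩, hy1, hρt ?_⟩
    exact Metric.ball_subset_ball (min_le_left _ _) hy2

lemma exists_analytic_approx (U : Set ℂ) (hU : IsOpen U) (k : ℂ → Fin 2 → ℂ)
    (hk : ContinuousOn k U) (hk1 : ∀ z ∈ U, ‖k z‖ ≤ 1) (ε : ℝ) (hε : 0 < ε) :
    ∃ h : ℂ → Fin 2 → ℂ, (∀ j, ∀ z ∈ U, AnalyticAt ℝ (fun z => h z j) z) ∧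
      ∀ z ∈ U, ∃ W : ℝ, 0 < W ∧ ‖h z - W • k z‖ ≤ ε * W := by
  have hR : ∀ x : ℂ, ∃ R : ℝ, x ∈ U → 0 < R ∧ Metric.ball x R ⊆ U ∧
      ∀ z ∈ Metric.ball x R, ‖k x - k z‖ ≤ ε / 2 := by
    intro x
    by_cases hx : x ∈ U
    · have h1 := hk.continuousAt (hU.mem_nhds hx)
      obtain ⟨R1, hR1, h1⟩ := Metric.continuousAt_iff.1 h1 (ε / 2) (by positivity)
      obtain ⟨R2, hR2, h2⟩ := Metric.isOpen_iff.1 hU x hx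
      refine ⟨min R1 R2, fun _ => ⟨by positivity,
        (Metric.ball_subset_ball (min_le_right _ _)).trans h2, fun z hz => ?_⟩⟩
      rw [← dist_eq_norm, dist_comm]
      exact (h1 ((Metric.ball_subset_ball (min_le_left _ _)) hz)).le
    · exact ⟨0, fun h => absurd h hx⟩
  choose R hR using hR
  obtain ⟨ι, hι, s, r, r', hs, hcov, hfin⟩ := exists_ball_cover U hU R (fun x hx => (hR x hx).1)
    (fun x hx => (hR x hx).2.1)
  obtain ⟨v, hv0, hvs, hv1⟩ : ∃ v : ι → ℝ, (∀ n, 0 < v n) ∧ Summable v ∧ ∑' n, v n ≤ min (ε / 4) 1 := by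
    have := Encodable.ofCountable ι
    obtain ⟨v, h0, c, hc, hce⟩ := posSumOfEncodable (ε := min (ε / 4) 1) (by positivity) ι
    exact ⟨v, h0, hc.summable, by rw [hc.tsum_eq]; exact hce⟩
  have hvle1 : ∀ n, v n ≤ 1 := fun n =>
    (hvs.le_tsum n (fun m _ => (hv0 m).le)).trans (hv1.trans (min_le_right _ _))
  have hN : ∀ n, ∃ N : ℝ, 0 ≤ N ∧ Real.exp (- (N * (r' n ^ 2 - r n ^ 2))) ≤ v n ^ 2 := by
    intro n
    have hpos : 0 < r' n ^ 2 - r n ^ 2 := by nlinarith [(hs n).2.1, (hs n).2.2.1]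
    refine ⟨max 0 (- Real.log (v n ^ 2) / (r' n ^ 2 - r n ^ 2)), le_max_left _ _, ?_⟩
    have h1 : - Real.log (v n ^ 2) ≤ max 0 (- Real.log (v n ^ 2) / (r' n ^ 2 - r n ^ 2)) * (r' n ^ 2 - r n ^ 2) := by
      rw [← div_le_iff₀ hpos]; exact le_max_right _ _
    calc _ ≤ Real.exp (Real.log (v n ^ 2)) := Real.exp_le_exp.2 (by linarith)
      _ = _ := Real.exp_log (by have := hv0 n; positivity)
  choose N hN0 hN using hN
  let w : ι → ℂ → ℝ := fun n z =>
    Real.exp (N n * (r n ^ 2 - ((z.re - (s n).re) ^ 2 + (z.im - (s n).im) ^ 2)))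
  have hw0 : ∀ n z, 0 < w n z := fun n z => Real.exp_pos _
  have hdist : ∀ z y : ℂ, dist z y ^ 2 = (z.re - y.re) ^ 2 + (z.im - y.im) ^ 2 := by
    intro z y
    rw [Complex.dist_eq, Complex.sq_norm, Complex.normSq_apply]; simp; ring
  have hw1 : ∀ n z, dist z (s n) ≤ r n → 1 ≤ w n z := by
    intro n z h
    apply Real.one_le_exp
    rw [← hdist]
    apply mul_nonneg (hN0 n)
    have : 0 ≤ dist z (s n) := dist_nonneg
    nlinarith
  have hw2 : ∀ n z, r' n ≤ dist z (s n) → w n z ≤ v n := by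
    intro n z h
    calc w n z ≤ Real.exp (- (N n * (r' n ^ 2 - r n ^ 2))) := by
          apply Real.exp_le_exp.2
          rw [← hdist]
          have h1 : r' n ^ 2 ≤ dist z (s n) ^ 2 := by
            have := (hs n).2.1; have := (hs n).2.2.1
            gcongr; linarith
          nlinarith [hN0 n]
      _ ≤ v n ^ 2 := hN n
      _ ≤ v n := by nlinarith [hv0 n, hvle1 n]
  have hws : ∀ z ∈ U, Summable (fun n => w n z) := by
    intro z hz
    refine Summable.of_norm_bounded_eventually hvs ?_
    obtain ⟨ρ, hρ, hf⟩ := hfin z hz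
    filter_upwards [hf.compl_mem_cofinite] with n hn
    rw [Real.norm_of_nonneg (hw0 n z).le]
    apply hw2
    by_contra! hlt
    exact hn ⟨z, hlt, Metric.mem_ball_self hρ⟩
  have hks : ∀ n, ‖k (s n)‖ ≤ 1 := fun n => hk1 _ (hs n).1
  have hksj : ∀ n j, ‖k (s n) j‖ ≤ 1 := fun n j => (norm_le_pi_norm _ j).trans (hks n)
  refine ⟨fun z j => ∑' n, (w n z : ℂ) * k (s n) j, ?_, ?_⟩
  · intro j z₀ hz₀
    obtain ⟨ρ, hρ, hf⟩ := hfin z₀ hz₀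
    let η := ρ / 10
    have hη : 0 < η := by positivity
    let dx : ι → ℝ := fun n => z₀.re - (s n).re
    let dy : ι → ℝ := fun n => z₀.im - (s n).im
    let Q : ι → ℝ := fun n => (r n ^ 2 - (dx n ^ 2 + dy n ^ 2) + 2 * η * (|dx n| + |dy n|) + 2 * η ^ 2) / 2
    have hest : ∀ (M c d : ℝ) (X : ℂ) (q x0 : ℝ), 0 ≤ M → X ∈ Metric.ball (x0 : ℂ) η →
        ‖Complex.exp (-(M : ℂ) * ((X - c) ^ 2 - ((x0 - c) ^ 2 - 2 * η * (|x0 - c| : ℝ) - η ^ 2)) + M * q)‖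
          ≤ Real.exp (M * q) := by
      intro M c d X q x0 hM hX
      rw [Complex.norm_exp]
      apply Real.exp_le_exp.2
      obtain ⟨ξ, rfl⟩ : ∃ ξ : ℂ, X = x0 + ξ := ⟨X - x0, by ring⟩
      have hξ : ‖ξ‖ < η := by simpa [Complex.dist_eq] using hX
      have h1 : ξ.re ^ 2 + ξ.im ^ 2 ≤ η ^ 2 := by
        have : ‖ξ‖ ^ 2 ≤ η ^ 2 := by gcongr
        rw [Complex.sq_norm, Complex.normSq_apply] at this; linarith
      have h2 : |ξ.re| ≤ η := (Complex.abs_re_le_norm ξ).trans hξ.le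
      have e1 : (-(M : ℂ) * (((x0 : ℂ) + ξ - c) ^ 2 - ((x0 - c) ^ 2 - 2 * η * (|x0 - c| : ℝ) - η ^ 2)) + M * q).re
          = - M * (2 * (x0 - c) * ξ.re + (ξ.re ^ 2 - ξ.im ^ 2) + 2 * η * |x0 - c| + η ^ 2) + M * q := by
        simp [pow_two]
        ring_nf
        simp
      rw [e1]
      have h3 : |(x0 - c) * ξ.re| ≤ |x0 - c| * η := by rw [abs_mul]; gcongr
      have h4 := neg_abs_le ((x0 - c) * ξ.re)
      have h5 : 0 ≤ 2 * (x0 - c) * ξ.re + (ξ.re ^ 2 - ξ.im ^ 2) + 2 * η * |x0 - c| + η ^ 2 := by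
        nlinarith [sq_nonneg ξ.re]
      nlinarith
    have hQ : Summable (fun n => Real.exp (N n * Q n)) := by
      refine Summable.of_norm_bounded_eventually hvs ?_
      filter_upwards [hf.compl_mem_cofinite] with n hn
      rw [Real.norm_of_nonneg (Real.exp_pos _).le]
      have hr0 := (hs n).2.1
      have hr1 := (hs n).2.2.1
      have hD : r' n + ρ ≤ dist z₀ (s n) := by
        by_contra! hlt
        apply hn
        rw [dist_comm] at hlt
        show (Metric.ball (s n) (r' n) ∩ Metric.ball z₀ ρ).Nonempty
        by_contra hemp
        rw [Set.not_nonempty_iff_eq_empty, ← Set.disjoint_iff_inter_eq_empty,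
          disjoint_ball_ball_iff (by linarith) hρ] at hemp
        linarith
      set D := dist z₀ (s n) with hDdef
      have hD2 : D ^ 2 = dx n ^ 2 + dy n ^ 2 := hdist _ _
      have hDx : |dx n| ≤ D := abs_le_of_sq_le_sq (by nlinarith [sq_nonneg (dy n)]) dist_nonneg
      have hDy : |dy n| ≤ D := abs_le_of_sq_le_sq (by nlinarith [sq_nonneg (dx n)]) dist_nonneg
      have hρη : ρ = 10 * η := by simp only [η]; ring
      have hQn : 2 * Q n ≤ - (r' n ^ 2 - r n ^ 2) := by
        simp only [Q]
        rw [← hD2]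
        nlinarith
      have hv := hN n
      have : Real.exp (N n * Q n) ^ 2 ≤ v n ^ 2 := by
        rw [← Real.exp_nat_mul]
        refine le_trans (Real.exp_le_exp.2 ?_) hv
        push_cast
        nlinarith [hN0 n]
      exact le_of_sq_le_sq this (hv0 n).le
    have key := analytic_sum_prod
      (fun n X => k (s n) j * Complex.exp (-(N n : ℂ) * ((X - (s n).re) ^ 2 -
        ((z₀.re - (s n).re) ^ 2 - 2 * η * (|z₀.re - (s n).re| : ℝ) - η ^ 2)) + N n * Q n))
      (fun n X => Complex.exp (-(N n : ℂ) * ((X - (s n).im) ^ 2 -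
        ((z₀.im - (s n).im) ^ 2 - 2 * η * (|z₀.im - (s n).im| : ℝ) - η ^ 2)) + N n * Q n))
      (fun n => by fun_prop) (fun n => by fun_prop) _ hQ z₀ η hη
      (fun n X hX => by
        rw [norm_mul]
        calc _ ≤ 1 * Real.exp (N n * Q n) := by
              gcongr
              · exact hksj n j
              · exact hest _ _ 0 _ _ _ (hN0 n) hX
          _ = _ := one_mul _)
      (fun n X hX => hest _ _ 0 _ _ _ (hN0 n) hX)
    convert key using 4 with z n
    rw [mul_assoc, ← Complex.exp_add, mul_comm]
    congr 1
    simp only [w, Q, dx, dy]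
    push_cast
    congr 1
    ring
  · intro z hz
    have hsw := hws z hz
    have hsc : Summable (fun n => (w n z : ℝ) • k (s n)) :=
      Summable.of_norm_bounded hsw (fun n => by
        rw [norm_smul, Real.norm_of_nonneg (hw0 n z).le]
        exact mul_le_of_le_one_right (hw0 n z).le (hks n))
    have hh : (fun j => ∑' n, (w n z : ℂ) * k (s n) j) = ∑' n, (w n z : ℝ) • k (s n) := by
      ext j
      rw [tsum_apply hsc]
      simp
    show ∃ W : ℝ, 0 < W ∧ ‖(fun j => ∑' n, (w n z : ℂ) * k (s n) j) - W • k z‖ ≤ ε * W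
    rw [hh]
    have hWk : (∑' n, w n z) • k z = ∑' n, w n z • k z := (hsw.tsum_smul_const _).symm
    obtain ⟨m, hm⟩ := hcov z hz
    have hW1 : 1 ≤ ∑' n, w n z := (hw1 m z hm).trans (hsw.le_tsum m (fun n _ => (hw0 n z).le))
    refine ⟨∑' n, w n z, by linarith, ?_⟩
    rw [hWk, ← hsc.tsum_sub (hsw.smul_const _)]
    have hb : Summable (fun n => ε / 2 * w n z + 2 * v n) := (hsw.mul_left _).add (hvs.mul_left _)
    calc _ ≤ ∑' n, (ε / 2 * w n z + 2 * v n) := by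
          apply tsum_of_norm_bounded hb.hasSum
          intro n
          rw [← smul_sub, norm_smul, Real.norm_of_nonneg (hw0 n z).le]
          have hw := hw0 n z
          have hv := hv0 n
          by_cases hd : dist z (s n) < r' n
          · have := (hR _ (hs n).1).2.2 z (hd.trans (hs n).2.2.2)
            nlinarith
          · have h1 := hw2 n z (not_lt.1 hd)
            have h2 : ‖k (s n) - k z‖ ≤ 2 := by
              have := norm_sub_le (k (s n)) (k z)
              have := hks n
              have := hk1 z hz
              linarith
            have h3 : 0 ≤ ‖k (s n) - k z‖ := norm_nonneg _
            nlinarith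
      _ = ε / 2 * ∑' n, w n z + 2 * ∑' n, v n := by
          rw [(hsw.mul_left _).tsum_add (hvs.mul_left _), tsum_mul_left, tsum_mul_left]
      _ ≤ _ := by
          have := hv1.trans (min_le_left _ _)
          nlinarith

def TT (p q r s : ℂ) : ℂ := p * (starRingEnd ℂ) p + q * (starRingEnd ℂ) q + r * (starRingEnd ℂ) r + s * (starRingEnd ℂ) s

def PM (p q r s : ℂ) : Matrix (Fin 2) (Fin 2) ℂ :=
  !![(q * (starRingEnd ℂ) q + s * (starRingEnd ℂ) s) / TT p q r s, -((starRingEnd ℂ) p * q + (starRingEnd ℂ) r * s) / TT p q r s;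
     -((starRingEnd ℂ) q * p + (starRingEnd ℂ) s * r) / TT p q r s, (p * (starRingEnd ℂ) p + r * (starRingEnd ℂ) r) / TT p q r s]

lemma TT_eq (p q r s : ℂ) : TT p q r s = ((‖p‖ ^ 2 + ‖q‖ ^ 2 + ‖r‖ ^ 2 + ‖s‖ ^ 2 : ℝ) : ℂ) := by
  simp only [TT, Complex.mul_conj, Complex.normSq_eq_norm_sq]
  push_cast; ring

lemma PM_idem (p q r s : ℂ) (h : p * s = q * r) (hT : TT p q r s ≠ 0) :
    PM p q r s * PM p q r s = PM p q r s := by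
  have h' : (starRingEnd ℂ) p * (starRingEnd ℂ) s = (starRingEnd ℂ) q * (starRingEnd ℂ) r := by rw [← map_mul, h, map_mul]
  ext i j
  fin_cases i <;> fin_cases j <;>
    simp only [PM, Matrix.mul_apply, Fin.sum_univ_two] <;> simp <;>
    rw [div_mul_div_comm, div_mul_div_comm, ← add_div, div_eq_div_iff (mul_ne_zero hT hT) hT] <;>
    generalize hX : TT p q r s = X <;> unfold TT at hX
  · linear_combination -X * ((starRingEnd ℂ) p * (starRingEnd ℂ) s - (starRingEnd ℂ) q * (starRingEnd ℂ) r) * h + X * (q * (starRingEnd ℂ) q + s * (starRingEnd ℂ) s) * hX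
  · linear_combination X * -((starRingEnd ℂ) p * q + (starRingEnd ℂ) r * s) * hX
  · linear_combination X * -((starRingEnd ℂ) q * p + (starRingEnd ℂ) s * r) * hX
  · linear_combination -X * ((starRingEnd ℂ) p * (starRingEnd ℂ) s - (starRingEnd ℂ) q * (starRingEnd ℂ) r) * h + X * (p * (starRingEnd ℂ) p + r * (starRingEnd ℂ) r) * hX

lemma PM_ker (p q r s : ℂ) (h : p * s = q * r) (v : Fin 2 → ℂ) :
    p * (PM p q r s *ᵥ v) 0 + q * (PM p q r s *ᵥ v) 1 = 0 ∧
    r * (PM p q r s *ᵥ v) 0 + s * (PM p q r s *ᵥ v) 1 = 0 := by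
  constructor
  · simp [PM, Matrix.mulVec, dotProduct, Fin.sum_univ_two]
    linear_combination ((starRingEnd ℂ) s * v 0 / TT p q r s - (starRingEnd ℂ) r * v 1 / TT p q r s) * h
  · simp [PM, Matrix.mulVec, dotProduct, Fin.sum_univ_two]
    linear_combination (- (starRingEnd ℂ) q * v 0 / TT p q r s + (starRingEnd ℂ) p * v 1 / TT p q r s) * h

lemma PM_ne (p q r s : ℂ) (hT : TT p q r s ≠ 0) : PM p q r s ≠ 0 := by
  intro h0
  have h1 := congrFun (congrFun h0 0) 0
  have h2 := congrFun (congrFun h0 1) 1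
  simp [PM] at h1 h2
  apply hT
  rcases h1 with h1 | h1
  · rcases h2 with h2 | h2
    · unfold TT; linear_combination h1 + h2
    · exact h2
  · exact h1

lemma PM_bound (p q r s : ℂ) (hT : TT p q r s ≠ 0) (v : Fin 2 → ℂ) :
    ‖PM p q r s *ᵥ v‖ ≤ 2 * ‖v‖ := by
  have hTn : ‖TT p q r s‖ = ‖p‖ ^ 2 + ‖q‖ ^ 2 + ‖r‖ ^ 2 + ‖s‖ ^ 2 := by
    rw [TT_eq, Complex.norm_real, Real.norm_of_nonneg (by positivity)]
  have hTp : 0 < ‖TT p q r s‖ := norm_pos_iff.2 hT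
  have key : ∀ a b c d : ℂ, ‖a‖ * ‖b‖ + ‖c‖ * ‖d‖ ≤ ‖TT p q r s‖ →
      ‖(a * b + c * d) / TT p q r s‖ ≤ 1 := by
    intro a b c d h
    rw [norm_div, div_le_one hTp]
    refine (norm_add_le _ _).trans ?_
    rw [norm_mul, norm_mul]; exact h
  have hent : ∀ i j, ‖PM p q r s i j‖ ≤ 1 := by
    intro i j
    fin_cases i <;> fin_cases j <;> simp only [PM] <;> simp [-norm_div, neg_div, -neg_add_rev] <;>
      (rw [← norm_div]; apply key) <;> simp only [RCLike.norm_conj] <;> rw [hTn] <;>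
      nlinarith [sq_nonneg (‖p‖ - ‖q‖), sq_nonneg (‖r‖ - ‖s‖), sq_nonneg ‖p‖, sq_nonneg ‖q‖,
        sq_nonneg ‖r‖, sq_nonneg ‖s‖]
  rw [pi_norm_le_iff_of_nonneg (by positivity)]
  intro i
  simp only [Matrix.mulVec, dotProduct, Fin.sum_univ_two]
  have h0 := norm_le_pi_norm v 0
  have h1 := norm_le_pi_norm v 1
  calc _ ≤ ‖PM p q r s i 0 * v 0‖ + ‖PM p q r s i 1 * v 1‖ := norm_add_le _ _
    _ ≤ 1 * ‖v‖ + 1 * ‖v‖ := by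
      rw [norm_mul, norm_mul]
      gcongr
      · exact hent i 0
      · exact hent i 1
    _ = _ := by ring

def rotN (a b c d : ℝ) : ℝ := a ^ 2 + b ^ 2 + c ^ 2 + d ^ 2

def rotM (a b c d : ℝ) : Matrix (Fin 4) (Fin 4) ℝ :=
  !![1, 0, 0, 0;
     0, (a^2+b^2-c^2-d^2) / rotN a b c d, 2*(a*c+b*d) / rotN a b c d, 2*(a*d-b*c) / rotN a b c d;
     0, (-2*(a*c-b*d)) / rotN a b c d, (a^2-b^2-c^2+d^2) / rotN a b c d, (-2*a*b-2*c*d) / rotN a b c d;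
     0, (-2*(a*d+b*c)) / rotN a b c d, (2*a*b-2*c*d) / rotN a b c d, (a^2-b^2+c^2-d^2) / rotN a b c d]

lemma rotM_SO (a b c d : ℝ) (h : rotN a b c d ≠ 0) : SOplus13 (rotM a b c d) := by
  have h' := h
  unfold rotN at h'
  refine ⟨?_, ?_, ?_⟩
  · ext i j
    fin_cases i <;> fin_cases j <;>
      simp [I13, rotM, Matrix.mul_apply, Fin.sum_univ_four, Matrix.diagonal_apply] <;>
      (try unfold rotN) <;> (try field_simp) <;> (try ring)
  · rw [Matrix.det_succ_row_zero]
    simp [rotM, Fin.sum_univ_four, Matrix.det_fin_three, Fin.succAbove]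
    unfold rotN
    field_simp
    ring
  · simp [rotM]

lemma rotM_apply (k1 k2 b0 b1 b2 b3 : ℂ) (h : rotN k1.re k1.im k2.re k2.im ≠ 0)
    (h1 : (b0 + b1) * k1 + (b2 - I * b3) * k2 = 0) (h2 : (b2 + I * b3) * k1 + (b0 - b1) * k2 = 0)
    (v : Fin 4 → ℂ) (hv : v = ((rotM k1.re k1.im k2.re k2.im).map Complex.ofReal).mulVec ![b0, b1, b2, b3]) :
    v = ![v 0, -v 0, v 2, I * v 2] := by
  obtain ⟨a, b⟩ := k1
  obtain ⟨c, d⟩ := k2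
  simp only at h hv
  have hn : ((rotN a b c d : ℝ) : ℂ) ≠ 0 := by exact_mod_cast h
  have e1 : (⟨a, b⟩ : ℂ) = a + b * I := Complex.mk_eq_add_mul_I a b
  have e2 : (⟨c, d⟩ : ℂ) = c + d * I := Complex.mk_eq_add_mul_I c d
  rw [e1, e2] at h1 h2
  have hI : I ^ 2 = -1 := Complex.I_sq
  have g : v 0 + v 1 = 0 ∧ v 2 + I * v 3 = 0 := by
    subst hv
    constructor
    · simp [rotM, Matrix.mulVec, dotProduct, Fin.sum_univ_four]
      field_simp
      simp only [rotN]; push_cast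
      linear_combination (a - b * I) * h1 + (c - d * I) * h2 + (b0*b^2+b0*d^2+2*a*d*b3-2*b*c*b3+2*b*d*b2+b^2*b1-d^2*b1) * hI
    · simp [rotM, Matrix.mulVec, dotProduct, Fin.sum_univ_four]
      field_simp
      linear_combination -(c + d * I) * h1 + (a + b * I) * h2 + (-2*a*b*b3-2*c*d*b3+2*b*d*b1-b^2*b2-b^2*b3*I+d^2*b2-d^2*b3*I) * hI
  ext i
  fin_cases i
  · simp
  · simp; linear_combination g.1
  · simp
  · simp; linear_combination (-I) * g.2 + v 3 * hI

lemma an_conj {f : ℂ → ℂ} {z : ℂ} (hf : AnalyticAt ℝ f z) :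
    AnalyticAt ℝ (fun z => (starRingEnd ℂ) (f z)) z :=
  ((Complex.conjCLE : ℂ →L[ℝ] ℂ).analyticAt (f z)).comp hf

lemma an_re {f : ℂ → ℂ} {z : ℂ} (hf : AnalyticAt ℝ f z) :
    AnalyticAt ℝ (fun z => (f z).re) z :=
  (Complex.reCLM.analyticAt (f z)).comp hf

lemma an_im {f : ℂ → ℂ} {z : ℂ} (hf : AnalyticAt ℝ f z) :
    AnalyticAt ℝ (fun z => (f z).im) z :=
  (Complex.imCLM.analyticAt (f z)).comp hf

lemma PM_an {p q r s : ℂ → ℂ} {z : ℂ} (hp : AnalyticAt ℝ p z) (hq : AnalyticAt ℝ q z)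
    (hr : AnalyticAt ℝ r z) (hs : AnalyticAt ℝ s z) (hT : TT (p z) (q z) (r z) (s z) ≠ 0) (i j : Fin 2) :
    AnalyticAt ℝ (fun z => PM (p z) (q z) (r z) (s z) i j) z := by
  have hp' := an_conj hp
  have hq' := an_conj hq
  have hr' := an_conj hr
  have hs' := an_conj hs
  have hTan : AnalyticAt ℝ (fun z => TT (p z) (q z) (r z) (s z)) z := by
    unfold TT
    exact (((hp.mul hp').add (hq.mul hq')).add (hr.mul hr')).add (hs.mul hs')
  fin_cases i <;> fin_cases j <;> simp [PM, -neg_add_rev]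
  · exact ((hq.mul hq').add (hs.mul hs')).div hTan hT
  · exact ((hp'.mul hq).add (hr'.mul hs)).neg.div hTan hT
  · exact ((hq'.mul hp).add (hs'.mul hr)).neg.div hTan hT
  · exact ((hp.mul hp').add (hr.mul hr')).div hTan hT

lemma rotM_an {a b c d : ℂ → ℝ} {z : ℂ} (ha : AnalyticAt ℝ a z) (hb : AnalyticAt ℝ b z)
    (hc : AnalyticAt ℝ c z) (hd : AnalyticAt ℝ d z) (hN : rotN (a z) (b z) (c z) (d z) ≠ 0)
    (i j : Fin 4) :
    AnalyticAt ℝ (fun z => rotM (a z) (b z) (c z) (d z) i j) z := by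
  have hNan : AnalyticAt ℝ (fun z => rotN (a z) (b z) (c z) (d z)) z := by
    unfold rotN; fun_prop
  have hdiv : ∀ g : ℂ → ℝ, AnalyticAt ℝ g z →
      AnalyticAt ℝ (fun z => g z / rotN (a z) (b z) (c z) (d z)) z :=
    fun g hg => hg.div hNan hN
  fin_cases i <;> fin_cases j <;> simp only [rotM] <;> simp <;>
    first
    | exact analyticAt_const
    | (refine hdiv (fun z => _) ?_; fun_prop)

theorem stmt0 (U : Set ℂ) (hUo : IsOpen U) (hUc : ContractibleSpace U)
    (b : ℂ → Fin 4 → ℂ)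
    (hb_an : ∀ i, AnalyticOn ℝ (fun z => b z i) U)
    (hb_ne : ∀ z ∈ U, b z ≠ 0)
    (hb_null : ∀ z ∈ U, dotProduct (b z) (I13C.mulVec (b z)) = 0) :
    ∃ A : ℂ → Matrix (Fin 4) (Fin 4) ℝ,
      (∀ i j, AnalyticOn ℝ (fun z => A z i j) U) ∧
      (∀ z ∈ U, SOplus13 (A z)) ∧
      ∃ p q : ℂ → ℂ, ∀ z ∈ U,
        ((A z).map Complex.ofReal).mulVec (b z) = ![p z, -p z, q z, Complex.I * q z] := by
  have hban : ∀ i, ∀ z ∈ U, AnalyticAt ℝ (fun z => b z i) z := fun i z hz =>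
    (hUo.analyticOn_iff_analyticOnNhd.1 (hb_an i)) z hz
  let p : ℂ → ℂ := fun z => b z 0 + b z 1
  let q : ℂ → ℂ := fun z => b z 2 - I * b z 3
  let r : ℂ → ℂ := fun z => b z 2 + I * b z 3
  let s : ℂ → ℂ := fun z => b z 0 - b z 1
  have hp : ∀ z ∈ U, AnalyticAt ℝ p z := fun z hz => (hban 0 z hz).add (hban 1 z hz)
  have hq : ∀ z ∈ U, AnalyticAt ℝ q z := fun z hz =>
    (hban 2 z hz).sub (analyticAt_const.mul (hban 3 z hz))
  have hr : ∀ z ∈ U, AnalyticAt ℝ r z := fun z hz =>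
    (hban 2 z hz).add (analyticAt_const.mul (hban 3 z hz))
  have hs : ∀ z ∈ U, AnalyticAt ℝ s z := fun z hz => (hban 0 z hz).sub (hban 1 z hz)
  have hdet : ∀ z ∈ U, p z * s z = q z * r z := by
    intro z hz
    have h := hb_null z hz
    simp [I13C, dotProduct, Matrix.mulVec_diagonal, Fin.sum_univ_four] at h
    have hI : I ^ 2 = -1 := Complex.I_sq
    simp only [p, q, r, s]
    linear_combination -h + (b z 3) ^ 2 * hI
  have hT : ∀ z ∈ U, TT (p z) (q z) (r z) (s z) ≠ 0 := by
    intro z hz h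
    rw [TT_eq] at h
    have h' : ‖p z‖ ^ 2 + ‖q z‖ ^ 2 + ‖r z‖ ^ 2 + ‖s z‖ ^ 2 = 0 := by exact_mod_cast h
    have np := sq_nonneg ‖p z‖
    have nq := sq_nonneg ‖q z‖
    have nr := sq_nonneg ‖r z‖
    have ns := sq_nonneg ‖s z‖
    have ep : p z = 0 := by
      have : ‖p z‖ ^ 2 = 0 := by linarith
      simpa using this
    have eq : q z = 0 := by
      have : ‖q z‖ ^ 2 = 0 := by linarith
      simpa using this
    have er : r z = 0 := by
      have : ‖r z‖ ^ 2 = 0 := by linarith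
      simpa using this
    have es : s z = 0 := by
      have : ‖s z‖ ^ 2 = 0 := by linarith
      simpa using this
    simp only [p, q, r, s] at ep eq er es
    have hI : I ^ 2 = -1 := Complex.I_sq
    apply hb_ne z hz
    ext i
    fin_cases i <;> simp
    · linear_combination (ep + es) / 2
    · linear_combination (ep - es) / 2
    · linear_combination (eq + er) / 2
    · linear_combination (-I) * (er - eq) / 2 + b z 3 * hI
  let M : ℂ → Matrix (Fin 2) (Fin 2) ℂ := fun z => PM (p z) (q z) (r z) (s z)
  have hMan : ∀ i j, ∀ z ∈ U, AnalyticAt ℝ (fun z => M z i j) z := fun i j z hz =>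
    PM_an (hp z hz) (hq z hz) (hr z hz) (hs z hz) (hT z hz) i j
  have hMM : ∀ z ∈ U, M z * M z = M z := fun z hz => PM_idem _ _ _ _ (hdet z hz) (hT z hz)
  have hM0 : ∀ z ∈ U, M z ≠ 0 := fun z hz => PM_ne _ _ _ _ (hT z hz)
  have hMb : ∀ z ∈ U, ∀ v, ‖M z *ᵥ v‖ ≤ 2 * ‖v‖ := fun z hz v => PM_bound _ _ _ _ (hT z hz) v
  let P : U → (Fin 2 → ℂ) →L[ℂ] (Fin 2 → ℂ) := fun x =>
    LinearMap.toContinuousLinearMap (Matrix.toLin' (M x))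
  have hPapp : ∀ x v, P x v = M x *ᵥ v := fun x v => by simp [P]
  have hPc : Continuous P := by
    rw [continuous_clm_apply]
    intro v
    refine continuous_pi fun i => ?_
    have he : ∀ i j, Continuous (fun x : U => M x i j) := fun i j =>
      continuous_iff_continuousAt.2 fun x =>
        ContinuousAt.comp (f := fun x : U => (x : ℂ)) (hMan i j x x.2).continuousAt
          continuous_subtype_val.continuousAt
    simp only [hPapp, Matrix.mulVec, dotProduct, Fin.sum_univ_two]
    exact ((he i 0).mul continuous_const).add ((he i 1).mul continuous_const)
  obtain ⟨k0, hk0c, hk0⟩ := exists_cont_section P hPc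
    (fun x v => by rw [hPapp, hPapp, Matrix.mulVec_mulVec, hMM x x.2])
    (fun x h => hM0 x x.2 (by
      apply Matrix.toLin'.injective
      rw [map_zero]
      ext1 v
      have := hPapp x
      rw [h] at this
      ext i
      simp [← this]))
  classical
  let k : ℂ → Fin 2 → ℂ := fun z => if h : z ∈ U then (‖k0 ⟨z, h⟩‖⁻¹ : ℝ) • k0 ⟨z, h⟩ else 0
  have hkU : ∀ x : U, k x = (‖k0 x‖⁻¹ : ℝ) • k0 x := fun x => by simp [k]
  have hkc : ContinuousOn k U := by
    rw [continuousOn_iff_continuous_domRestrict]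
    have : U.domRestrict k = fun x => (‖k0 x‖⁻¹ : ℝ) • k0 x := by
      funext x; exact hkU x
    rw [this]
    exact (hk0c.norm.inv₀ fun x => norm_ne_zero_iff.2 (hk0 x).1).smul hk0c
  have hkn : ∀ z ∈ U, ‖k z‖ = 1 := by
    intro z hz
    rw [hkU ⟨z, hz⟩, norm_smul, norm_inv, norm_norm,
      inv_mul_cancel₀ (norm_ne_zero_iff.2 (hk0 ⟨z, hz⟩).1)]
  have hkM : ∀ z ∈ U, M z *ᵥ k z = k z := by
    intro z hz
    have h := (hk0 ⟨z, hz⟩).2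
    rw [hPapp] at h
    rw [hkU ⟨z, hz⟩, Matrix.mulVec_smul, h]
  obtain ⟨h, hhan, hhap⟩ := exists_analytic_approx U hUo k hkc (fun z hz => (hkn z hz).le)
    (1/4) (by norm_num)
  let κ : ℂ → Fin 2 → ℂ := fun z => M z *ᵥ h z
  have hκan : ∀ j, ∀ z ∈ U, AnalyticAt ℝ (fun z => κ z j) z := by
    intro j z hz
    simp only [κ, Matrix.mulVec, dotProduct, Fin.sum_univ_two]
    exact ((hMan j 0 z hz).mul (hhan 0 z hz)).add ((hMan j 1 z hz).mul (hhan 1 z hz))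
  have hκne : ∀ z ∈ U, κ z ≠ 0 := by
    intro z hz h0
    obtain ⟨W, hW, hle⟩ := hhap z hz
    have h1 := hMb z hz (h z - W • k z)
    rw [Matrix.mulVec_sub, Matrix.mulVec_smul, hkM z hz] at h1
    change ‖κ z - W • k z‖ ≤ _ at h1
    rw [h0, zero_sub, norm_neg, norm_smul, hkn z hz, Real.norm_of_nonneg hW.le] at h1
    linarith
  have hκker : ∀ z ∈ U, p z * κ z 0 + q z * κ z 1 = 0 ∧ r z * κ z 0 + s z * κ z 1 = 0 :=
    fun z hz => PM_ker _ _ _ _ (hdet z hz) (h z)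
  have hN : ∀ z ∈ U, rotN (κ z 0).re (κ z 0).im (κ z 1).re (κ z 1).im ≠ 0 := by
    intro z hz h0
    unfold rotN at h0
    have n1 := sq_nonneg (κ z 0).re
    have n2 := sq_nonneg (κ z 0).im
    have n3 := sq_nonneg (κ z 1).re
    have n4 := sq_nonneg (κ z 1).im
    have e1 : (κ z 0).re = 0 := pow_eq_zero_iff (two_ne_zero) |>.1 (by linarith)
    have e2 : (κ z 0).im = 0 := pow_eq_zero_iff (two_ne_zero) |>.1 (by linarith)
    have e3 : (κ z 1).re = 0 := pow_eq_zero_iff (two_ne_zero) |>.1 (by linarith)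
    have e4 : (κ z 1).im = 0 := pow_eq_zero_iff (two_ne_zero) |>.1 (by linarith)
    apply hκne z hz
    ext i
    fin_cases i
    · exact Complex.ext e1 e2
    · exact Complex.ext e3 e4
  let A : ℂ → Matrix (Fin 4) (Fin 4) ℝ := fun z =>
    rotM (κ z 0).re (κ z 0).im (κ z 1).re (κ z 1).im
  refine ⟨A, fun i j z hz => ?_, fun z hz => rotM_SO _ _ _ _ (hN z hz),
    fun z => ((A z).map Complex.ofReal).mulVec (b z) 0,
    fun z => ((A z).map Complex.ofReal).mulVec (b z) 2, fun z hz => ?_⟩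
  · exact (rotM_an (an_re (hκan 0 z hz)) (an_im (hκan 0 z hz)) (an_re (hκan 1 z hz))
      (an_im (hκan 1 z hz)) (hN z hz) i j).analyticWithinAt
  · have hbz : b z = ![b z 0, b z 1, b z 2, b z 3] := by
      ext i; fin_cases i <;> rfl
    refine rotM_apply (κ z 0) (κ z 1) (b z 0) (b z 1) (b z 2) (b z 3) (hN z hz)
      (hκker z hz).1 (hκker z hz).2 _ ?_
    rw [← hbz]
end
end

section
/- Let U be a contractible open subset of ℂ and let B₁ : U → Mat(4×n, ℂ) be a real analytic matrix-valued function, not identically zero, which admits a factorization B₁ = S₁ R₁ S₂ where R₁ : U → Mat(4×n, ℂ) is holomorphic, S₁ : U → GL(4,ℂ) is real analytic with S₁(z)ᵀ I₁,₃ S₁(z) = I₁,₃ and det S₁(z) = 1 for all z, and S₂ : U → GL(n,ℂ) is real analytic with S₂(z)ᵀ S₂(z) = Iₙ and det S₂(z) = 1 for all z. Then B₁(z)ᵀ I₁,₃ B₁(z) = 0 for all z ∈ U if and only if there exists a real analytic map 𝔸 : U → SO⁺(1,3) such that either every column of 𝔸(z)B₁(z) lies in span_ℂ{(1,−1,0,0)ᵀ,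 (0,0,1,i)ᵀ} for all z ∈ U, or every column of 𝔸(z)B₁(z) lies in span_ℂ{(1,−1,0,0)ᵀ, (0,0,1,−i)ᵀ} for all z ∈ U. (Theorem 3.4 of the paper, with the factorization through a holomorphic potential made explicit as a hypothesis.) -/
open Matrix Complex

noncomputable section

open Filter Topology

lemma wp_prod {ι : Type*} {U : Set ℂ} (hU : IsOpen U) (F : ι → ℂ → ℂ) (u : ι → ℝ) (hu : Summable u)
    (hF : ∀ i, DifferentiableOn ℂ (F i) U)
    (hb : ∀ K ⊆ U, IsCompact K → ∀ᶠ i in cofinite, ∀ x ∈ K, ‖F i x - 1‖ ≤ u i) :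
    DifferentiableOn ℂ (fun x => ∏' i, F i x) U ∧ (∀ x ∈ U, Multipliable (fun i => F i x)) ∧
    ∀ x ∈ U, (∀ i, F i x ≠ 0) → ∏' i, F i x ≠ 0 := by
  have key : HasProdLocallyUniformlyOn F (fun x => ∏' i, F i x) U := by
    apply hasProdLocallyUniformlyOn_of_forall_compact hU
    intro K hK hc
    have := Summable.hasProdUniformlyOn_one_add (f := fun i x => F i x - 1) hc hu (hb K hK hc)
      (fun i => ((hF i).continuousOn.mono hK).sub continuousOn_const)
    simpa using this
  refine ⟨?_, ?_, ?_⟩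
  · refine (hasProdLocallyUniformlyOn_iff_tendstoLocallyUniformlyOn.mp key).differentiableOn
      (Eventually.of_forall fun s => ?_) hU
    exact DifferentiableOn.fun_finsetProd fun i _ => hF i
  · intro x hx
    exact (key.hasProd hx).multipliable
  · intro x hx h
    have hs : Summable (fun i => ‖F i x - 1‖) := by
      refine Summable.of_norm_bounded_eventually hu ?_
      filter_upwards [hb {x} (by simpa using hx) isCompact_singleton] with i hi
      simpa using hi x rfl
    have := tprod_one_add_ne_zero_of_summable (f := fun i => F i x - 1) (by simpa using h) hs
    simpa using this

/-- elementary factor bound -/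
lemma wp_bound (m e : ℕ) (u : ℂ) (hu : ‖u‖ ≤ 1/2) :
    ‖((1 - u) * Complex.exp (- Complex.logTaylor (m + e + 1) (-u))) ^ m - 1‖ ≤ 2 * (1/2:ℝ) ^ e := by
  have h1 : (1 : ℂ) - u ≠ 0 := by
    intro h
    have : u = 1 := by linear_combination -h
    rw [this] at hu; norm_num at hu
  have hb := Complex.norm_log_sub_logTaylor_le (m + e) (z := -u) (by rw [norm_neg]; linarith)
  rw [norm_neg] at hb
  set t := Complex.log (1 + -u) - Complex.logTaylor (m + e + 1) (-u) with ht
  have e1 : (1 - u) * Complex.exp (- Complex.logTaylor (m + e + 1) (-u)) = Complex.exp t := by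
    rw [ht, sub_eq_add_neg (Complex.log _), Complex.exp_add, Complex.exp_log (by simpa [← sub_eq_add_neg] using h1)]
    ring
  have ht2 : ‖t‖ ≤ (1/2:ℝ) ^ (m + e) := by
    refine hb.trans ?_
    have a1 : ‖u‖ ^ (m + e + 1) ≤ (1/2:ℝ) ^ (m + e + 1) := pow_le_pow_left₀ (norm_nonneg _) hu _
    have a2 : (1 - ‖u‖)⁻¹ ≤ 2 := by
      rw [inv_le_comm₀] <;> linarith
    have a3 : (0:ℝ) ≤ (1 - ‖u‖)⁻¹ := by
      apply inv_nonneg.2; linarith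
    have a4 : ‖u‖ ^ (m + e + 1) * (1 - ‖u‖)⁻¹ ≤ (1/2:ℝ) ^ (m + e + 1) * 2 := by gcongr
    calc _ ≤ ‖u‖ ^ (m + e + 1) * (1 - ‖u‖)⁻¹ := by
            apply div_le_self (by positivity)
            have : (0:ℝ) ≤ ((m+e : ℕ) : ℝ) := by positivity
            linarith
      _ ≤ _ := a4
      _ = _ := by rw [pow_succ]; ring
  have hm : (m : ℝ) * (1/2:ℝ)^m ≤ 1 := by
    have : (m:ℝ) ≤ 2 ^ m := by exact_mod_cast (Nat.lt_two_pow_self (n := m)).le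
    rw [one_div, inv_pow, mul_inv_le_iff₀ (by positivity)]
    linarith
  have hmt : ‖(m:ℂ) * t‖ ≤ (1/2:ℝ)^e := by
    rw [norm_mul, Complex.norm_natCast]
    calc (m:ℝ) * ‖t‖ ≤ m * (1/2:ℝ) ^ (m + e) := by gcongr
      _ = (m * (1/2:ℝ)^m) * (1/2)^e := by rw [pow_add]; ring
      _ ≤ 1 * (1/2)^e := by gcongr
      _ = _ := one_mul _
  rw [e1, ← Complex.exp_nat_mul]
  have h3 : ‖(m:ℂ) * t‖ ≤ 1 := hmt.trans (pow_le_one₀ (by norm_num) (by norm_num))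
  refine (Complex.norm_exp_sub_one_le h3).trans ?_
  gcongr

lemma wp_fin {U : Set ℂ} (m : ℂ → ℕ)
    (hm : ∀ a ∈ U, ∀ᶠ z in 𝓝[≠] a, m z = 0) (D : Set ℂ) (hD : IsCompact D) (hDU : D ⊆ U) :
    {a | a ∈ D ∧ m a ≠ 0}.Finite := by
  have h : ∀ a ∈ D, {z | z ≠ a → m z = 0} ∈ 𝓝 a := by
    intro a ha
    have := hm a (hDU ha)
    rw [eventually_nhdsWithin_iff] at this
    exact this
  obtain ⟨t, -, ht⟩ := hD.elim_nhds_subcover _ h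
  refine t.finite_toSet.subset ?_
  rintro a ⟨ha, hma⟩
  obtain ⟨x, hx, hax⟩ := Set.mem_iUnion₂.1 (ht ha)
  have : a = x := by
    by_contra hne
    exact hma (hax hne)
  rw [this]; exact hx

lemma wp_exists {U : Set ℂ} (hU : IsOpen U) (m : ℂ → ℕ)
    (hm : ∀ a ∈ U, ∀ᶠ z in 𝓝[≠] a, m z = 0) :
    ∃ h : ℂ → ℂ, DifferentiableOn ℂ h U ∧ ∀ a ∈ U, ∃ k : ℂ → ℂ, DifferentiableOn ℂ k U ∧ k a ≠ 0 ∧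
      ∀ z ∈ U, h z = (z - a) ^ (m a) * k z := by
  classical
  rcases U.eq_empty_or_nonempty with rfl | ⟨a0, ha0⟩
  · exact ⟨0, by simp, by simp⟩
  obtain ⟨c, hcm, hcU⟩ : ∃ c, m c = 0 ∧ c ∈ U :=
    ((hm a0 ha0).and (mem_nhdsWithin_of_mem_nhds (hU.mem_nhds ha0))).exists
  -- radius
  obtain ⟨r, hr, hrU⟩ : ∃ r > 0, ∀ z, dist z c < r → z ∈ U ∧ m z = 0 := by
    have h1 := hm c hcU
    rw [eventually_nhdsWithin_iff] at h1
    have h2 := h1.and (hU.mem_nhds hcU)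
    obtain ⟨r, hr, h⟩ := Metric.eventually_nhds_iff.1 h2
    refine ⟨r, hr, fun z hz => ⟨(h hz).2, ?_⟩⟩
    by_cases hzc : z = c
    · rw [hzc, hcm]
    · exact (h hz).1 hzc
  set S : Set ℂ := {β | ∀ z ∈ U, β * (z - c) ≠ 1} with hS
  have hS0 : (0:ℂ) ∈ S := by intro z _; simp
  have hSinv : ∀ β, β ∉ S → β ≠ 0 ∧ c + β⁻¹ ∈ U := by
    intro β hβ
    simp only [hS, Set.mem_ofPred_eq, not_forall, not_not] at hβ
    obtain ⟨z, hz, h⟩ := hβ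
    have hb : β ≠ 0 := by rintro rfl; simp at h
    refine ⟨hb, ?_⟩
    have : c + β⁻¹ = z := by
      field_simp; linear_combination -h
    rwa [this]
  have hSinv' : ∀ β, β ≠ 0 → c + β⁻¹ ∈ U → β ∉ S := by
    intro β hb hβ h
    exact h _ hβ (by field_simp; ring)
  have hSclosed : IsClosed S := by
    rw [← isOpen_compl_iff, isOpen_iff_mem_nhds]
    intro β hβ
    obtain ⟨hb, hβU⟩ := hSinv β hβ
    have hc : ContinuousAt (fun β : ℂ => c + β⁻¹) β := by fun_prop (disch := assumption)
    filter_upwards [hc.preimage_mem_nhds (hU.mem_nhds hβU), isOpen_ne.mem_nhds hb] with x hx hx0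
    exact hSinv' x hx0 hx
  have hSbdd : ∀ β ∈ S, ‖β‖ ≤ r⁻¹ := by
    intro β hβ
    by_contra hlt
    push Not at hlt
    have hpos : 0 < ‖β‖ := lt_trans (by positivity) hlt
    refine hSinv' β (norm_pos_iff.1 hpos) (hrU _ ?_).1 hβ
    simp only [dist_self_add_left, norm_inv]
    exact inv_lt_of_inv_lt₀ hr hlt
  have hScomp : IsCompact S :=
    (isCompact_closedBall (0:ℂ) r⁻¹).of_isClosed_subset hSclosed
      (fun β hβ => by simpa using hSbdd β hβ)
  let Z : Set ℂ := {a | a ∈ U ∧ m a ≠ 0}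
  have hZc : ∀ a ∈ Z, a - c ≠ 0 := by
    intro a ha h
    exact ha.2 (by rw [sub_eq_zero.1 h, hcm])
  have hZS : ∀ a ∈ Z, (a - c)⁻¹ ∉ S := by
    intro a ha
    exact hSinv' _ (inv_ne_zero (hZc a ha)) (by simpa using ha.1)
  have hfin : ∀ ε > 0, {a | a ∈ Z ∧ ε ≤ Metric.infDist (a - c)⁻¹ S}.Finite := by
    intro ε hε
    set C : Set ℂ := Metric.closedBall 0 r⁻¹ ∩ {α | ε ≤ Metric.infDist α S} with hC
    have hCc : IsCompact C := (isCompact_closedBall _ _).inter_right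
      (isClosed_le continuous_const (Metric.continuous_infDist_pt S))
    have hCS : ∀ α ∈ C, α ∉ S := by
      intro α hα h
      have := hα.2
      simp only [Set.mem_ofPred_eq, Metric.infDist_zero_of_mem h] at this
      linarith
    have hD : IsCompact ((fun β : ℂ => c + β⁻¹) '' C) := by
      apply hCc.image_of_continuousOn
      intro α hα
      have := (hSinv α (hCS α hα)).1
      apply ContinuousAt.continuousWithinAt
      fun_prop (disch := assumption)
    refine (wp_fin m hm _ hD ?_).subset ?_
    · rintro _ ⟨α, hα, rfl⟩
      exact (hSinv α (hCS α hα)).2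
    · rintro a ⟨ha, hd⟩
      refine ⟨⟨(a - c)⁻¹, ⟨?_, hd⟩, by simp⟩, ha.2⟩
      simp only [Metric.mem_closedBall, dist_zero_right, norm_inv]
      have : r ≤ ‖a - c‖ := by
        by_contra hlt
        push Not at hlt
        exact ha.2 (hrU a (by rwa [dist_eq_norm])).2
      gcongr
  have hZcount : Z.Countable := by
    have : Z ⊆ ⋃ n : ℕ, {a | a ∈ Z ∧ (1 / ((n:ℝ) + 1)) ≤ Metric.infDist (a - c)⁻¹ S} := by
      intro a ha
      have hpos : 0 < Metric.infDist (a - c)⁻¹ S :=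
        (hSclosed.notMem_iff_infDist_pos ⟨0, hS0⟩).1 (hZS a ha)
      obtain ⟨n, hn⟩ := exists_nat_one_div_lt hpos
      exact Set.mem_iUnion.2 ⟨n, ha, hn.le⟩
    exact (Set.countable_iUnion fun n => (hfin _ (by positivity)).countable).mono this
  have : Countable Z := hZcount.to_subtype
  obtain ⟨e, he⟩ := exists_injective_nat Z
  choose β hβS hβd using fun a : Z => hScomp.exists_infDist_eq_dist ⟨0, hS0⟩ ((a:ℂ) - c)⁻¹
  let den : Z → ℂ → ℂ := fun a z => 1 - β a * (z - c)
  have hden : ∀ a, ∀ z ∈ U, den a z ≠ 0 := by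
    intro a z hz h
    exact hβS a z hz (by simp only [den] at h; linear_combination -h)
  let u : Z → ℂ → ℂ := fun a z => (((a:ℂ) - c)⁻¹ - β a) * (z - c) / den a z
  have hdu : ∀ a, DifferentiableOn ℂ (u a) U := by
    intro a
    apply DifferentiableOn.div
    · fun_prop
    · simp only [den]; fun_prop
    · exact hden a
  let N : Z → ℕ := fun a => m a + e a + 1
  let X : Z → ℂ → ℂ := fun a z => Complex.exp (- Complex.logTaylor (N a) (- u a z))
  have hX : ∀ a, DifferentiableOn ℂ (X a) U := by
    intro a
    simp only [X, Complex.logTaylor]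
    have := hdu a
    fun_prop
  let F : Z → ℂ → ℂ := fun a z => ((1 - u a z) * X a z) ^ (m a)
  have hF : ∀ a, DifferentiableOn ℂ (F a) U := by
    intro a
    have := hX a
    have := hdu a
    simp only [F]
    fun_prop
  let G : Z → ℂ → ℂ := fun a z => (-((a:ℂ) - c)⁻¹ / den a z * X a z) ^ (m a)
  have hG : ∀ a, DifferentiableOn ℂ (G a) U := by
    intro a
    have := hX a
    have hd : DifferentiableOn ℂ (fun z => -((a:ℂ) - c)⁻¹ / den a z) U := by
      apply DifferentiableOn.div
      · fun_prop
      · simp only [den]; fun_prop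
      · exact hden a
    simp only [G]
    exact (hd.mul this).pow _
  have hGne : ∀ a, ∀ z ∈ U, G a z ≠ 0 := by
    intro a z hz
    simp only [G, X]
    apply pow_ne_zero
    apply mul_ne_zero
    · exact div_ne_zero (neg_ne_zero.2 (inv_ne_zero (hZc a a.2))) (hden a z hz)
    · exact Complex.exp_ne_zero _
  have hFG : ∀ a : Z, ∀ z ∈ U, F a z = (z - a) ^ (m a) * G a z := by
    intro a z hz
    simp only [F, G]
    rw [← mul_pow]
    congr 1
    have h1 := hden a z hz
    have h2 := hZc a a.2
    have : 1 - u a z = (z - a) * (-((a:ℂ) - c)⁻¹ / den a z) := by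
      simp only [u]
      rw [eq_comm, ← sub_eq_zero]
      field_simp
      simp only [den]
      field_simp
      ring
    rw [this]; ring
  have hsum : Summable (fun a : Z => 2 * (1/2:ℝ) ^ (e a)) :=
    ((summable_geometric_of_lt_one (by norm_num) (by norm_num : (1/2:ℝ) < 1)).comp_injective he).mul_left 2
  have hb : ∀ K ⊆ U, IsCompact K → ∀ᶠ a in cofinite, ∀ x ∈ K, ‖F a x - 1‖ ≤ 2 * (1/2:ℝ) ^ (e a) := by
    intro K hKU hK
    obtain ⟨δ, hδ, hδK⟩ : ∃ δ > 0, ∀ x ∈ K, ∀ b ∈ S, δ ≤ ‖1 - b * (x - c)‖ := by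
      rcases K.eq_empty_or_nonempty with rfl | hne
      · exact ⟨1, one_pos, by simp⟩
      obtain ⟨p, hp, hmin⟩ := (hK.prod hScomp).exists_isMinOn (hne.prod ⟨0, hS0⟩)
        (f := fun p : ℂ × ℂ => ‖1 - p.2 * (p.1 - c)‖) (by fun_prop)
      refine ⟨_, ?_, fun x hx b hb => hmin (Set.mk_mem_prod hx hb)⟩
      refine norm_pos_iff.2 ?_
      intro h
      exact hp.2 p.1 (hKU hp.1) (by linear_combination -h)
    obtain ⟨M, hM⟩ := hK.exists_bound_of_continuousOn (f := fun x => x - c) (by fun_prop)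
    have hM' : ∀ x ∈ K, ‖x - c‖ ≤ max M 1 := fun x hx => (hM x hx).trans (le_max_left _ _)
    have hM1 : 0 < max M 1 := lt_max_of_lt_right one_pos
    have hf := hfin (δ / (2 * max M 1)) (by positivity)
    have : {a : Z | ¬ (Metric.infDist ((a:ℂ) - c)⁻¹ S < δ / (2 * max M 1))}.Finite := by
      refine Set.Finite.of_finite_image (f := Subtype.val) (hf.subset ?_) Subtype.val_injective.injOn
      rintro _ ⟨a, ha, rfl⟩
      exact ⟨a.2, not_lt.1 ha⟩
    have this' : ∀ᶠ a : Z in cofinite, Metric.infDist ((a:ℂ) - c)⁻¹ S < δ / (2 * max M 1) := this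
    filter_upwards [this'] with a ha x hx
    apply wp_bound
    have h1 := hδK x hx (β a) (hβS a)
    have h2 := hM' x hx
    rw [hβd a, dist_eq_norm] at ha
    simp only [u, den]
    rw [norm_div, norm_mul, div_le_iff₀ (hδ.trans_le h1)]
    have h3 : ‖((a:ℂ) - c)⁻¹ - β a‖ * ‖x - c‖ ≤ δ / (2 * max M 1) * max M 1 := by gcongr
    have h4 : δ / (2 * max M 1) * max M 1 = δ / 2 := by field_simp
    rw [h4] at h3
    linarith
  obtain ⟨P1, P2, P3⟩ := wp_prod hU F _ hsum hF hb
  refine ⟨fun z => ∏' a, F a z, P1, fun a haU => ?_⟩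
  by_cases hma : m a = 0
  · refine ⟨fun z => ∏' a, F a z, P1, P3 a haU ?_, by simp [hma]⟩
    intro b
    rw [hFG b a haU]
    refine mul_ne_zero (pow_ne_zero _ ?_) (hGne b a haU)
    intro h
    exact b.2.2 (by rw [← sub_eq_zero.1 h, hma])
  · let A : Z := ⟨a, haU, hma⟩
    let F' : Z → ℂ → ℂ := fun b => if b = A then G A else F b
    obtain ⟨Q1, Q2, Q3⟩ := wp_prod hU F' _ hsum (by
      intro b
      by_cases h : b = A
      · simp only [F', h, if_true]; exact hG A
      · simp only [F', h, if_false]; exact hF b) (by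
      intro K hKU hK
      have : ∀ᶠ b : Z in cofinite, b ≠ A := by simp
      filter_upwards [hb K hKU hK, this] with b hb hbA
      simpa only [F', hbA, if_false] using hb)
    refine ⟨fun z => ∏' b, F' b z, Q1, Q3 a haU ?_, ?_⟩
    · intro b
      by_cases h : b = A
      · simp only [F', h, if_true]; exact hGne A a haU
      · simp only [F', h, if_false]
        rw [hFG b a haU]
        refine mul_ne_zero (pow_ne_zero _ ?_) (hGne b a haU)
        intro h'
        exact h (Subtype.ext (sub_eq_zero.1 h').symm)
    · intro z hz
      have h1 : HasProd (fun b => if b = A then (z - a) ^ (m a) else 1) ((z - a) ^ (m a)) := by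
        exact hasProd_ite_eq A _
      have h2 := h1.mul (Q2 z hz).hasProd
      rw [← h2.tprod_eq]
      refine tprod_congr fun b => ?_
      by_cases h : b = A
      · simp only [F', h, if_true]; exact hFG A z hz
      · simp only [F', h, if_false, one_mul]

lemma wp_local {f1 f2 : ℂ → ℂ} {a : ℂ} (h1 : AnalyticAt ℂ f1 a) (h2 : AnalyticAt ℂ f2 a)
    (hne : ∀ᶠ z in 𝓝[≠] a, f1 z ≠ 0) :
    ∃ (m : ℕ) (g1 g2 : ℂ → ℂ), AnalyticAt ℂ g1 a ∧ AnalyticAt ℂ g2 a ∧ (g1 a ≠ 0 ∨ g2 a ≠ 0) ∧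
      ∀ᶠ z in 𝓝 a, f1 z = (z - a) ^ m * g1 z ∧ f2 z = (z - a) ^ m * g2 z := by
  have hn1 : ¬ ∀ᶠ z in 𝓝 a, f1 z = 0 := by
    intro h
    obtain ⟨z, hz, hz'⟩ := (hne.and (h.filter_mono nhdsWithin_le_nhds)).exists
    exact hz hz'
  obtain ⟨n1, g1, hg1, hg1a, e1⟩ := (h1.exists_eventuallyEq_pow_smul_nonzero_iff).2 hn1
  by_cases hn2 : ∀ᶠ z in 𝓝 a, f2 z = 0
  · refine ⟨n1, g1, 0, hg1, analyticAt_const, Or.inl hg1a, ?_⟩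
    filter_upwards [e1, hn2] with z hz hz2
    exact ⟨by simpa using hz, by simpa using hz2⟩
  obtain ⟨n2, g2, hg2, hg2a, e2⟩ := (h2.exists_eventuallyEq_pow_smul_nonzero_iff).2 hn2
  rcases le_total n1 n2 with hle | hle
  · refine ⟨n1, g1, fun z => (z - a) ^ (n2 - n1) * g2 z, hg1, by fun_prop, Or.inl hg1a, ?_⟩
    filter_upwards [e1, e2] with z hz hz2
    refine ⟨by simpa using hz, ?_⟩
    rw [hz2, ← mul_assoc, ← pow_add, Nat.add_sub_cancel' hle, smul_eq_mul]
  · refine ⟨n2, fun z => (z - a) ^ (n1 - n2) * g1 z, g2, by fun_prop, hg2, Or.inr hg2a, ?_⟩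
    filter_upwards [e1, e2] with z hz hz2
    refine ⟨?_, by simpa using hz2⟩
    rw [hz, ← mul_assoc, ← pow_add, Nat.add_sub_cancel' hle, smul_eq_mul]

lemma wp_coprime_aux {U : Set ℂ} (hU : IsOpen U) (hUc : IsPreconnected U) {f1 f2 : ℂ → ℂ}
    (h1 : AnalyticOnNhd ℂ f1 U) (h2 : AnalyticOnNhd ℂ f2 U) (hne : ∃ z ∈ U, f1 z ≠ 0) :
    ∃ α1 α2 : ℂ → ℂ, AnalyticOnNhd ℂ α1 U ∧ AnalyticOnNhd ℂ α2 U ∧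
      (∀ z ∈ U, α1 z ≠ 0 ∨ α2 z ≠ 0) ∧ ∀ z ∈ U, f1 z * α2 z = f2 z * α1 z := by
  have hne' : ∀ a ∈ U, ∀ᶠ z in 𝓝[≠] a, f1 z ≠ 0 := by
    intro a ha
    rcases (h1 a ha).eventually_eq_zero_or_eventually_ne_zero with h | h
    · exfalso
      obtain ⟨z, hz, hz'⟩ := hne
      exact hz' (h1.eqOn_zero_of_preconnected_of_eventuallyEq_zero hUc ha h hz)
    · exact h
  have hloc : ∀ a, ∃ (m : ℕ) (g1 g2 : ℂ → ℂ), a ∈ U → (AnalyticAt ℂ g1 a ∧ AnalyticAt ℂ g2 a ∧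
      (g1 a ≠ 0 ∨ g2 a ≠ 0) ∧
      ∀ᶠ z in 𝓝 a, f1 z = (z - a) ^ m * g1 z ∧ f2 z = (z - a) ^ m * g2 z) := by
    intro a
    by_cases ha : a ∈ U
    · obtain ⟨m, g1, g2, h⟩ := wp_local (h1 a ha) (h2 a ha) (hne' a ha)
      exact ⟨m, g1, g2, fun _ => h⟩
    · exact ⟨0, 0, 0, fun h => absurd h ha⟩
  choose m g1 g2 hg using hloc
  have hm0 : ∀ z ∈ U, f1 z ≠ 0 → m z = 0 := by
    intro z hz hf
    by_contra hm
    have := (hg z hz).2.2.2.self_of_nhds.1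
    rw [sub_self, zero_pow hm, zero_mul] at this
    exact hf this
  obtain ⟨h, hh, hk⟩ := wp_exists hU m (by
    intro a ha
    filter_upwards [hne' a ha, mem_nhdsWithin_of_mem_nhds (hU.mem_nhds ha)] with z hz hzU
    exact hm0 z hzU hz)
  have hk' : ∀ a, ∃ k : ℂ → ℂ, a ∈ U → (DifferentiableOn ℂ k U ∧ k a ≠ 0 ∧
      ∀ z ∈ U, h z = (z - a) ^ (m a) * k z) := by
    intro a
    by_cases ha : a ∈ U
    · obtain ⟨k, hk⟩ := hk a ha
      exact ⟨k, fun _ => hk⟩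
    · exact ⟨0, fun h => absurd h ha⟩
  choose k hk using hk'
  have key : ∀ (f : ℂ → ℂ) (g : ℂ → ℂ → ℂ), (∀ a ∈ U, AnalyticAt ℂ (g a) a) →
      (∀ a ∈ U, ∀ᶠ z in 𝓝 a, f z = (z - a) ^ (m a) * g a z) →
      AnalyticOnNhd ℂ (fun z => g z z / k z z) U := by
    intro f g hga hf a ha
    have han : AnalyticAt ℂ (fun z => g a z / k a z) a :=
      (hga a ha).div (((hk a ha).1.analyticOnNhd hU) a ha) (hk a ha).2.1
    refine han.congr ?_
    have hka : ∀ᶠ z in 𝓝 a, k a z ≠ 0 :=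
      (((hk a ha).1.continuousOn.continuousAt (hU.mem_nhds ha))).eventually_ne (hk a ha).2.1
    have hU' : ∀ᶠ z in 𝓝 a, z ∈ U := hU.mem_nhds ha
    filter_upwards [hf a ha, hka, hU'] with z hz hkz hzU
    by_cases hza : z = a
    · rw [hza]
    · have hp : (z - a) ^ (m a) ≠ 0 := pow_ne_zero _ (sub_ne_zero.2 hza)
      have e1 := (hk a ha).2.2 z hzU
      have e2 := (hk z hzU).2.2 z hzU
      have hhz : h z ≠ 0 := by rw [e1]; exact mul_ne_zero hp hkz
      have hmz : m z = 0 := by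
        by_contra hm
        rw [sub_self, zero_pow hm, zero_mul] at e2
        exact hhz e2
      have e3 := (hf z hzU).self_of_nhds
      simp only [hmz, pow_zero, one_mul] at e2 e3
      rw [← e2, ← e3, e1, hz, mul_div_mul_left _ _ hp]
  refine ⟨fun z => g1 z z / k z z, fun z => g2 z z / k z z,
    key f1 g1 (fun a ha => (hg a ha).1) (fun a ha => (hg a ha).2.2.2.mono fun _ h => h.1),
    key f2 g2 (fun a ha => (hg a ha).2.1) (fun a ha => (hg a ha).2.2.2.mono fun _ h => h.2), ?_, ?_⟩
  · intro z hz
    rcases (hg z hz).2.2.1 with h | h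
    · exact Or.inl (div_ne_zero h (hk z hz).2.1)
    · exact Or.inr (div_ne_zero h (hk z hz).2.1)
  · intro z hz
    obtain ⟨e1, e2⟩ := (hg z hz).2.2.2.self_of_nhds
    rw [e1, e2]; ring

lemma wp_coprime {U : Set ℂ} (hU : IsOpen U) (hUc : IsPreconnected U) {f1 f2 : ℂ → ℂ}
    (h1 : AnalyticOnNhd ℂ f1 U) (h2 : AnalyticOnNhd ℂ f2 U) (hne : ∃ z ∈ U, f1 z ≠ 0 ∨ f2 z ≠ 0) :
    ∃ α1 α2 : ℂ → ℂ, AnalyticOnNhd ℂ α1 U ∧ AnalyticOnNhd ℂ α2 U ∧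
      (∀ z ∈ U, α1 z ≠ 0 ∨ α2 z ≠ 0) ∧ ∀ z ∈ U, f1 z * α2 z = f2 z * α1 z := by
  obtain ⟨z, hz, h | h⟩ := hne
  · exact wp_coprime_aux hU hUc h1 h2 ⟨z, hz, h⟩
  · obtain ⟨a, b, ha, hb, h3, h4⟩ := wp_coprime_aux hU hUc h2 h1 ⟨z, hz, h⟩
    exact ⟨b, a, hb, ha, fun z hz => (h3 z hz).symm, fun z hz => (h4 z hz).symm⟩

/-- family of mutually parallel holomorphic vectors -/
lemma wp_family {ι : Type*} {U : Set ℂ} (hU : IsOpen U) (hUc : IsPreconnected U)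
    {f1 f2 : ι → ℂ → ℂ}
    (h1 : ∀ i, AnalyticOnNhd ℂ (f1 i) U) (h2 : ∀ i, AnalyticOnNhd ℂ (f2 i) U)
    (hne : ∃ i, ∃ z ∈ U, f1 i z ≠ 0 ∨ f2 i z ≠ 0)
    (hpar : ∀ i j, ∀ z ∈ U, f1 i z * f2 j z = f2 i z * f1 j z) :
    ∃ α1 α2 : ℂ → ℂ, AnalyticOnNhd ℂ α1 U ∧ AnalyticOnNhd ℂ α2 U ∧
      (∀ z ∈ U, α1 z ≠ 0 ∨ α2 z ≠ 0) ∧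
      ∀ i, ∀ z ∈ U, ∃ c, f1 i z = c * α1 z ∧ f2 i z = c * α2 z := by
  obtain ⟨i, hi⟩ := hne
  obtain ⟨α1, α2, ha1, ha2, hα, hf⟩ := wp_coprime hU hUc (h1 i) (h2 i) hi
  refine ⟨α1, α2, ha1, ha2, hα, ?_⟩
  intro j
  have hd : AnalyticOnNhd ℂ (fun z => f1 j z * α2 z - f2 j z * α1 z) U :=
    ((h1 j).mul ha2).sub ((h2 j).mul ha1)
  have hz : ∀ z ∈ U, f1 j z * α2 z - f2 j z * α1 z = 0 := by
    obtain ⟨w, hw, h | h⟩ := hi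
    · refine ((h1 i).eq_zero_or_eq_zero_of_mul_eq_zero hd ?_ hUc).resolve_left
        (fun h' => h (h' w hw))
      intro z hz
      linear_combination f1 j z * hf z hz - α1 z * hpar i j z hz
    · refine ((h2 i).eq_zero_or_eq_zero_of_mul_eq_zero hd ?_ hUc).resolve_left
        (fun h' => h (h' w hw))
      intro z hz
      linear_combination f2 j z * hf z hz - α2 z * hpar i j z hz
  intro z hzU
  have e := hz z hzU
  rcases hα z hzU with h | h
  · refine ⟨f1 j z / α1 z, by field_simp, ?_⟩
    field_simp; linear_combination -e
  · refine ⟨f2 j z / α2 z, ?_, by field_simp⟩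
    field_simp; linear_combination e

lemma par_trans {u1 u2 v1 v2 w1 w2 : ℂ} (hv : v1 ≠ 0 ∨ v2 ≠ 0) (h1 : u1 * v2 - u2 * v1 = 0)
    (h2 : v1 * w2 - v2 * w1 = 0) : u1 * w2 - u2 * w1 = 0 := by
  rcases hv with h | h
  · apply (mul_eq_zero.1 (?_ : v1 * (u1 * w2 - u2 * w1) = 0)).resolve_left h
    linear_combination w1 * h1 + u1 * h2
  · apply (mul_eq_zero.1 (?_ : v2 * (u1 * w2 - u2 * w1) = 0)).resolve_left h
    linear_combination w2 * h1 + u2 * h2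

lemma rank_one_factor (P Q Z Y : ℂ) (h : P * Q = Z * Y) :
    ∃ a1 a2 b1 b2 : ℂ, P = a1 * b1 ∧ Z = a1 * b2 ∧ Y = a2 * b1 ∧ Q = a2 * b2 := by
  by_cases hP : P = 0
  · subst hP
    rw [zero_mul, eq_comm, mul_eq_zero] at h
    rcases h with h | h
    · exact ⟨0, 1, Y, Q, by simp, by simp [h], by simp, by simp⟩
    · exact ⟨Z, Q, 0, 1, by simp, by simp, by simp [h], by simp⟩
  · exact ⟨1, Y / P, P, Z, by simp, by simp, by field_simp, by field_simp; linear_combination h⟩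

lemma iso_pt {n : ℕ} (P Q Z Y : Fin n → ℂ)
    (h : ∀ j k, P j * Q k + Q j * P k = Z j * Y k + Y j * Z k) :
    (∀ j k, P j * Y k = Y j * P k ∧ P j * Q k = Y j * Z k ∧ Z j * Y k = Q j * P k ∧
      Z j * Q k = Q j * Z k) ∨
    (∀ j k, P j * Z k = Z j * P k ∧ P j * Q k = Z j * Y k ∧ Y j * Z k = Q j * P k ∧
      Y j * Q k = Q j * Y k) := by
  have hf : ∀ j, ∃ a1 a2 b1 b2 : ℂ, P j = a1 * b1 ∧ Z j = a1 * b2 ∧ Y j = a2 * b1 ∧ Q j = a2 * b2 := by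
    intro j
    apply rank_one_factor
    linear_combination (h j j) / 2
  choose a1 a2 b1 b2 hP hZ hY hQ using hf
  have hw : ∀ j k, (a1 j * a2 k - a2 j * a1 k) * (b1 j * b2 k - b2 j * b1 k) = 0 := by
    intro j k
    have := h j k
    rw [hP, hQ, hZ, hY, hP, hQ, hZ, hY] at this
    linear_combination this
  by_contra hcon
  rw [not_or] at hcon
  obtain ⟨hc1, hc2⟩ := hcon
  push Not at hc1 hc2
  obtain ⟨j, k, hjk⟩ := hc1
  obtain ⟨l, m, hlm⟩ := hc2
  simp only [hP, hQ, hZ, hY] at hjk hlm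
  have A : a1 j * a2 k - a2 j * a1 k ≠ 0 := by
    intro h0
    refine hjk ?_ ?_ ?_ ?_
    · linear_combination b1 j * b1 k * h0
    · linear_combination b1 j * b2 k * h0
    · linear_combination b2 j * b1 k * h0
    · linear_combination b2 j * b2 k * h0
  have B : b1 l * b2 m - b2 l * b1 m ≠ 0 := by
    intro h0
    refine hlm ?_ ?_ ?_ ?_
    · linear_combination a1 l * a1 m * h0
    · linear_combination a1 l * a2 m * h0
    · linear_combination a2 l * a1 m * h0
    · linear_combination a2 l * a2 m * h0
  have bj : b1 j ≠ 0 ∨ b2 j ≠ 0 := by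
    by_contra h0; push Not at h0
    simp [h0.1, h0.2] at hjk
  have bk : b1 k ≠ 0 ∨ b2 k ≠ 0 := by
    by_contra h0; push Not at h0
    simp [h0.1, h0.2] at hjk
  have al : a1 l ≠ 0 ∨ a2 l ≠ 0 := by
    by_contra h0; push Not at h0
    simp [h0.1, h0.2] at hlm
  have am : a1 m ≠ 0 ∨ a2 m ≠ 0 := by
    by_contra h0; push Not at h0
    simp [h0.1, h0.2] at hlm
  have Bjk : b1 j * b2 k - b2 j * b1 k = 0 := (mul_eq_zero.1 (hw j k)).resolve_left A
  have main : ∀ x, (a1 x ≠ 0 ∨ a2 x ≠ 0) → b1 x * b2 j - b2 x * b1 j = 0 := by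
    intro x hx
    rcases mul_eq_zero.1 (hw x j) with h1 | h1
    · rcases mul_eq_zero.1 (hw x k) with h2 | h2
      · exfalso
        apply A
        exact par_trans hx (by linear_combination -h1) h2
      · exact par_trans bk h2 (by linear_combination -Bjk)
    · exact h1
  apply B
  exact par_trans bj (main l al) (by linear_combination -main m am)

/-- Lorentz bilinear form -/
def lor (x y : Fin 4 → ℂ) : ℂ := -(x 0 * y 0) + x 1 * y 1 + x 2 * y 2 + x 3 * y 3

def PlaneData (n : ℕ) (U : Set ℂ) (R : ℂ → Matrix (Fin 4) (Fin n) ℂ) : Prop :=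
  ∃ r1 r2 : ℂ → Fin 4 → ℂ,
    (∀ i, AnalyticOnNhd ℂ (fun z => r1 z i) U) ∧ (∀ i, AnalyticOnNhd ℂ (fun z => r2 z i) U) ∧
    (∀ z ∈ U, lor (r1 z) (r1 z) = 0 ∧ lor (r1 z) (r2 z) = 0 ∧ lor (r2 z) (r2 z) = 0) ∧
    (∀ z ∈ U, ∀ c d : ℂ, (∀ i, c * r1 z i + d * r2 z i = 0) → c = 0 ∧ d = 0) ∧
    (∀ z ∈ U, ∀ j, ∃ c d : ℂ, ∀ i, R z i j = c * r1 z i + d * r2 z i)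

lemma plane_aux {n : ℕ} {U : Set ℂ} (hU : IsOpen U) (hUc : IsPreconnected U)
    (R : ℂ → Matrix (Fin 4) (Fin n) ℂ)
    (hR : ∀ i j, AnalyticOnNhd ℂ (fun z => R z i j) U)
    (hne : ∃ z ∈ U, ∃ i j, R z i j ≠ 0) (J : ℂ) (hJ : J ^ 2 = -1)
    (hpar : ∀ z ∈ U, ∀ j k,
      (R z 0 j + R z 1 j) * (R z 2 k - J * R z 3 k) = (R z 2 j - J * R z 3 j) * (R z 0 k + R z 1 k) ∧
      (R z 0 j + R z 1 j) * (R z 0 k - R z 1 k) = (R z 2 j - J * R z 3 j) * (R z 2 k + J * R z 3 k) ∧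
      (R z 2 j + J * R z 3 j) * (R z 2 k - J * R z 3 k) = (R z 0 j - R z 1 j) * (R z 0 k + R z 1 k) ∧
      (R z 2 j + J * R z 3 j) * (R z 0 k - R z 1 k) = (R z 0 j - R z 1 j) * (R z 2 k + J * R z 3 k)) :
    PlaneData n U R := by
  have hJ0 : J ≠ 0 := by rintro rfl; norm_num at hJ
  let f1 : Fin n × Bool → ℂ → ℂ := fun p z =>
    if p.2 then R z 2 p.1 + J * R z 3 p.1 else R z 0 p.1 + R z 1 p.1
  let f2 : Fin n × Bool → ℂ → ℂ := fun p z =>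
    if p.2 then R z 0 p.1 - R z 1 p.1 else R z 2 p.1 - J * R z 3 p.1
  obtain ⟨α1, α2, ha1, ha2, hα, hf⟩ := wp_family hU hUc (f1 := f1) (f2 := f2)
    (by
      rintro ⟨j, b⟩
      cases b
      · exact (hR 0 j).add (hR 1 j)
      · exact (hR 2 j).add (analyticOnNhd_const.mul (hR 3 j)))
    (by
      rintro ⟨j, b⟩
      cases b
      · exact (hR 2 j).sub (analyticOnNhd_const.mul (hR 3 j))
      · exact (hR 0 j).sub (hR 1 j))
    (by
      by_contra hcon
      push Not at hcon
      obtain ⟨z, hz, i, j, hij⟩ := hne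
      have h1 := hcon (j, false) z hz
      have h2 := hcon (j, true) z hz
      simp only [f1, f2, if_true, Bool.false_eq_true, if_false] at h1 h2
      apply hij
      have e0 : R z 0 j = 0 := by linear_combination (h1.1 + h2.2) / 2
      have e1 : R z 1 j = 0 := by linear_combination (h1.1 - h2.2) / 2
      have e2 : R z 2 j = 0 := by linear_combination (h1.2 + h2.1) / 2
      have e3 : R z 3 j = 0 := by
        apply (mul_eq_zero.1 (?_ : J * R z 3 j = 0)).resolve_left hJ0
        linear_combination (h2.1 - h1.2) / 2
      fin_cases i
      exacts [e0, e1, e2, e3])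
    (by
      rintro ⟨j, b⟩ ⟨k, b'⟩ z hz
      have := hpar z hz j k
      cases b <;> cases b'
      · simpa [f1, f2] using this.1
      · simpa [f1, f2] using this.2.1
      · simpa [f1, f2] using this.2.2.1
      · simpa [f1, f2] using this.2.2.2)
  have hα1 : AnalyticOnNhd ℂ (fun z => α1 z) U := ha1
  have hα2 : AnalyticOnNhd ℂ (fun z => α2 z) U := ha2
  refine ⟨fun z => ![α1 z, α1 z, α2 z, J * α2 z], fun z => ![α2 z, -α2 z, α1 z, -(J * α1 z)],
    ?_, ?_, ?_, ?_, ?_⟩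
  · intro i
    fin_cases i
    exacts [ha1, ha1, ha2, analyticOnNhd_const.mul ha2]
  · intro i
    fin_cases i
    exacts [ha2, ha2.neg, ha1, (analyticOnNhd_const.mul ha1).neg]
  · intro z hz
    simp only [lor, Matrix.cons_val]
    refine ⟨?_, ?_, ?_⟩
    · linear_combination α2 z ^ 2 * hJ
    · linear_combination - α1 z * α2 z * hJ
    · linear_combination α1 z ^ 2 * hJ
  · intro z hz c d h
    have h0 := h 0
    have h1 := h 1
    have h2 := h 2
    have h3 := h 3
    simp only [Matrix.cons_val] at h0 h1 h2 h3
    have k1 : c * α1 z = 0 := by linear_combination (h0 + h1) / 2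
    have k2 : d * α2 z = 0 := by linear_combination (h0 - h1) / 2
    have h3' : c * α2 z - d * α1 z = 0 := by
      apply (mul_eq_zero.1 (?_ : J * (c * α2 z - d * α1 z) = 0)).resolve_left hJ0
      linear_combination h3
    have k3 : c * α2 z = 0 := by linear_combination (h2 + h3') / 2
    have k4 : d * α1 z = 0 := by linear_combination (h2 - h3') / 2
    rcases hα z hz with h | h
    · exact ⟨(mul_eq_zero.1 k1).resolve_right h, (mul_eq_zero.1 k4).resolve_right h⟩
    · exact ⟨(mul_eq_zero.1 k3).resolve_right h, (mul_eq_zero.1 k2).resolve_right h⟩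
  · intro z hz j
    obtain ⟨c, hc1, hc2⟩ := hf (j, false) z hz
    obtain ⟨d, hd1, hd2⟩ := hf (j, true) z hz
    simp only [f1, f2, if_true, Bool.false_eq_true, if_false] at hc1 hc2 hd1 hd2
    refine ⟨c / 2, d / 2, ?_⟩
    intro i
    fin_cases i
    · simp only [Fin.zero_eta, Matrix.cons_val]
      linear_combination (hc1 + hd2) / 2
    · simp only [Fin.mk_one, Matrix.cons_val]
      linear_combination (hc1 - hd2) / 2
    · simp only [Fin.reduceFinMk, Matrix.cons_val]
      linear_combination (hc2 + hd1) / 2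
    · simp only [Fin.reduceFinMk, Matrix.cons_val]
      linear_combination (J * hc2 - J * hd1) / 2 + R z 3 j * hJ

lemma plane_exists {n : ℕ} {U : Set ℂ} (hU : IsOpen U) (hUc : IsPreconnected U)
    (R : ℂ → Matrix (Fin 4) (Fin n) ℂ)
    (hR : ∀ i j, AnalyticOnNhd ℂ (fun z => R z i j) U)
    (hne : ∃ z ∈ U, ∃ i j, R z i j ≠ 0)
    (hiso : ∀ z ∈ U, ∀ j k, lor (fun i => R z i j) (fun i => R z i k) = 0) :
    PlaneData n U R := by
  let P : Fin n → ℂ → ℂ := fun j z => R z 0 j + R z 1 j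
  let Q : Fin n → ℂ → ℂ := fun j z => R z 0 j - R z 1 j
  let Z : Fin n → ℂ → ℂ := fun j z => R z 2 j + Complex.I * R z 3 j
  let Y : Fin n → ℂ → ℂ := fun j z => R z 2 j - Complex.I * R z 3 j
  have hP : ∀ j, AnalyticOnNhd ℂ (P j) U := fun j => (hR 0 j).add (hR 1 j)
  have hQ : ∀ j, AnalyticOnNhd ℂ (Q j) U := fun j => (hR 0 j).sub (hR 1 j)
  have hZ : ∀ j, AnalyticOnNhd ℂ (Z j) U := fun j => (hR 2 j).add (analyticOnNhd_const.mul (hR 3 j))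
  have hY : ∀ j, AnalyticOnNhd ℂ (Y j) U := fun j => (hR 2 j).sub (analyticOnNhd_const.mul (hR 3 j))
  have pt : ∀ z ∈ U, _ := fun z hz => iso_pt (fun j => P j z) (fun j => Q j z) (fun j => Z j z)
    (fun j => Y j z) (by
      intro j k
      have := hiso z hz j k
      simp only [lor] at this
      simp only [P, Q, Z, Y]
      linear_combination -2 * this + 2 * R z 3 j * R z 3 k * Complex.I_sq)
  have dom : ∀ f g f' g' : ℂ → ℂ, AnalyticOnNhd ℂ f U → AnalyticOnNhd ℂ g U → AnalyticOnNhd ℂ f' U →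
      AnalyticOnNhd ℂ g' U → (∀ z ∈ U, f z = g z ∨ f' z = g' z) →
      (∀ z ∈ U, f z = g z) ∨ (∀ z ∈ U, f' z = g' z) := by
    intro f g f' g' hf hg hf' hg' h
    have := (hf.sub hg).eq_zero_or_eq_zero_of_mul_eq_zero (hf'.sub hg') (by
      intro z hz
      rcases h z hz with h | h <;> simp [h]) hUc
    simpa [sub_eq_zero] using this
  let C : Fin n → Fin n → Fin 4 → (ℂ → ℂ) × (ℂ → ℂ) := fun j k => ![(P j * Y k, Y j * P k),
    (P j * Q k, Y j * Z k), (Z j * Y k, Q j * P k), (Z j * Q k, Q j * Z k)]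
  let D : Fin n → Fin n → Fin 4 → (ℂ → ℂ) × (ℂ → ℂ) := fun j k => ![(P j * Z k, Z j * P k),
    (P j * Q k, Z j * Y k), (Y j * Z k, Q j * P k), (Y j * Q k, Q j * Y k)]
  have hC : ∀ j k s, AnalyticOnNhd ℂ (C j k s).1 U ∧ AnalyticOnNhd ℂ (C j k s).2 U := by
    intro j k s
    fin_cases s
    · exact ⟨(hP j).mul (hY k), (hY j).mul (hP k)⟩
    · exact ⟨(hP j).mul (hQ k), (hY j).mul (hZ k)⟩
    · exact ⟨(hZ j).mul (hY k), (hQ j).mul (hP k)⟩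
    · exact ⟨(hZ j).mul (hQ k), (hQ j).mul (hZ k)⟩
  have hD : ∀ j k s, AnalyticOnNhd ℂ (D j k s).1 U ∧ AnalyticOnNhd ℂ (D j k s).2 U := by
    intro j k s
    fin_cases s
    · exact ⟨(hP j).mul (hZ k), (hZ j).mul (hP k)⟩
    · exact ⟨(hP j).mul (hQ k), (hZ j).mul (hY k)⟩
    · exact ⟨(hY j).mul (hZ k), (hQ j).mul (hP k)⟩
    · exact ⟨(hY j).mul (hQ k), (hQ j).mul (hY k)⟩
  have alt : (∀ j k s, ∀ z ∈ U, (C j k s).1 z = (C j k s).2 z) ∨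
      (∀ j k s, ∀ z ∈ U, (D j k s).1 z = (D j k s).2 z) := by
    by_contra hcon
    rw [not_or] at hcon
    obtain ⟨h1, h2⟩ := hcon
    rw [not_forall] at h1 h2
    obtain ⟨j, h1⟩ := h1
    obtain ⟨l, h2⟩ := h2
    rw [not_forall] at h1 h2
    obtain ⟨k, h1⟩ := h1
    obtain ⟨m, h2⟩ := h2
    rw [not_forall] at h1 h2
    obtain ⟨s, h1⟩ := h1
    obtain ⟨t, h2⟩ := h2
    refine (dom _ _ _ _ (hC j k s).1 (hC j k s).2 (hD l m t).1 (hD l m t).2 ?_).elim h1 h2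
    intro z hz
    rcases pt z hz with h | h
    · left
      have := h j k
      fin_cases s
      exacts [this.1, this.2.1, this.2.2.1, this.2.2.2]
    · right
      have := h l m
      fin_cases t
      exacts [this.1, this.2.1, this.2.2.1, this.2.2.2]
  rcases alt with h | h
  · exact plane_aux hU hUc R hR hne Complex.I Complex.I_sq
      (fun z hz j k => ⟨h j k 0 z hz, h j k 1 z hz, h j k 2 z hz, h j k 3 z hz⟩)
  · refine plane_aux hU hUc R hR hne (-Complex.I) (by simp) (fun z hz j k => ?_)
    have h0 : P j z * Z k z = Z j z * P k z := h j k 0 z hz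
    have h1 : P j z * Q k z = Z j z * Y k z := h j k 1 z hz
    have h2 : Y j z * Z k z = Q j z * P k z := h j k 2 z hz
    have h3 : Y j z * Q k z = Q j z * Y k z := h j k 3 z hz
    simp only [P, Q, Z, Y] at h0 h1 h2 h3
    refine ⟨?_, ?_, ?_, ?_⟩
    · linear_combination h0
    · linear_combination h1
    · linear_combination h2
    · linear_combination h3

lemma lor_eq (x y : Fin 4 → ℂ) : lor x y = x ⬝ᵥ (I13C *ᵥ y) := by
  simp [lor, I13C, dotProduct, Matrix.mulVec_diagonal, Fin.sum_univ_four]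

lemma lor_mulVec (S : Matrix (Fin 4) (Fin 4) ℂ) (hS : Sᵀ * I13C * S = I13C) (x y : Fin 4 → ℂ) :
    lor (S *ᵥ x) (S *ᵥ y) = lor x y := by
  rw [lor_eq, lor_eq]
  conv_rhs => rw [← hS]
  rw [← Matrix.mulVec_mulVec, ← Matrix.mulVec_mulVec, Matrix.dotProduct_mulVec x,
    Matrix.vecMul_transpose]

lemma map_form {A : Matrix (Fin 4) (Fin 4) ℝ} (hA : Aᵀ * I13 * A = I13) :
    (A.map Complex.ofReal)ᵀ * I13C * (A.map Complex.ofReal) = I13C := by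
  have hI : I13.map Complex.ofReal = I13C := by
    ext i j
    fin_cases i <;> fin_cases j <;> simp [I13, I13C]
  have h := congrArg (fun M : Matrix (Fin 4) (Fin 4) ℝ => M.map Complex.ofRealHom) hA
  simp only [Matrix.map_mul, Matrix.transpose_map] at h
  have hI2 : I13.map Complex.ofRealHom = I13C := hI
  rw [hI2] at h
  exact h

def frame (u v : Fin 3 → ℝ) : Matrix (Fin 4) (Fin 4) ℝ :=
  !![1, 0, 0, 0;
     0, u 1 * v 2 - u 2 * v 1, u 2 * v 0 - u 0 * v 2, u 0 * v 1 - u 1 * v 0;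
     0, u 0, u 1, u 2;
     0, v 0, v 1, v 2]

def frame' (u v : Fin 3 → ℝ) : Matrix (Fin 4) (Fin 4) ℝ :=
  !![1, 0, 0, 0;
     0, -(u 1 * v 2 - u 2 * v 1), -(u 2 * v 0 - u 0 * v 2), -(u 0 * v 1 - u 1 * v 0);
     0, u 0, u 1, u 2;
     0, -v 0, -v 1, -v 2]

lemma so_of_rows {A : Matrix (Fin 4) (Fin 4) ℝ} (h : A * I13 * Aᵀ = I13) :
    Aᵀ * I13 * A = I13 := by
  have hI : I13 * I13 = 1 := by
    ext i j
    fin_cases i <;> fin_cases j <;> simp [I13]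
  have h1 : (A * I13) * (Aᵀ * I13) = 1 := by
    rw [← Matrix.mul_assoc, h, hI]
  have h2 := mul_eq_one_comm.1 h1
  calc Aᵀ * I13 * A = (Aᵀ * I13) * (A * I13) * I13 := by
        rw [Matrix.mul_assoc _ (A * I13), Matrix.mul_assoc A, hI, Matrix.mul_one]
    _ = I13 := by rw [h2, Matrix.one_mul]

lemma form_entry (A : Matrix (Fin 4) (Fin 4) ℝ) (i j : Fin 4) :
    (A * I13 * Aᵀ) i j = -(A i 0 * A j 0) + A i 1 * A j 1 + A i 2 * A j 2 + A i 3 * A j 3 := by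
  rw [I13, Matrix.mul_apply]
  simp only [Matrix.mul_diagonal, Fin.sum_univ_four, Matrix.transpose_apply, Matrix.cons_val]
  ring

lemma frame_so (u v : Fin 3 → ℝ) (hu : u 0 ^ 2 + u 1 ^ 2 + u 2 ^ 2 = 1)
    (hv : v 0 ^ 2 + v 1 ^ 2 + v 2 ^ 2 = 1) (huv : u 0 * v 0 + u 1 * v 1 + u 2 * v 2 = 0) :
    SOplus13 (frame u v) := by
  have hw : (u 1 * v 2 - u 2 * v 1) ^ 2 + (u 2 * v 0 - u 0 * v 2) ^ 2
      + (u 0 * v 1 - u 1 * v 0) ^ 2 = 1 := by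
    linear_combination hu * (v 0 ^ 2 + v 1 ^ 2 + v 2 ^ 2) + hv
      - (u 0 * v 0 + u 1 * v 1 + u 2 * v 2) * huv
  refine ⟨so_of_rows ?_, ?_, ?_⟩
  · ext i j
    rw [form_entry]
    fin_cases i <;> fin_cases j <;> simp [frame, I13]
    · linear_combination hw
    · ring
    · ring
    · ring
    · linear_combination hu
    · linear_combination huv
    · ring
    · linear_combination huv
    · linear_combination hv
  · simp [frame, Matrix.det_succ_row_zero, Fin.sum_univ_succ, Fin.succAbove]
    linear_combination hw
  · simp [frame]

lemma frame'_so (u v : Fin 3 → ℝ) (hu : u 0 ^ 2 + u 1 ^ 2 + u 2 ^ 2 = 1)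
    (hv : v 0 ^ 2 + v 1 ^ 2 + v 2 ^ 2 = 1) (huv : u 0 * v 0 + u 1 * v 1 + u 2 * v 2 = 0) :
    SOplus13 (frame' u v) := by
  have hw : (u 1 * v 2 - u 2 * v 1) ^ 2 + (u 2 * v 0 - u 0 * v 2) ^ 2
      + (u 0 * v 1 - u 1 * v 0) ^ 2 = 1 := by
    linear_combination hu * (v 0 ^ 2 + v 1 ^ 2 + v 2 ^ 2) + hv
      - (u 0 * v 0 + u 1 * v 1 + u 2 * v 2) * huv
  refine ⟨so_of_rows ?_, ?_, ?_⟩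
  · ext i j
    rw [form_entry]
    fin_cases i <;> fin_cases j <;> simp [frame', I13]
    · linear_combination hw
    · ring
    · ring
    · ring
    · linear_combination hu
    · linear_combination -huv
    · ring
    · linear_combination -huv
    · linear_combination hv
  · simp [frame', Matrix.det_succ_row_zero, Fin.sum_univ_succ, Fin.succAbove]
    linear_combination hw
  · simp [frame']

lemma no_plane3 (p q : Fin 4 → ℂ) (hp0 : p 0 = 0) (hq0 : q 0 = 0) (h1 : lor p p = 0)
    (h2 : lor p q = 0) (h3 : lor q q = 0)
    (hind : ∀ c d : ℂ, (∀ i, c * p i + d * q i = 0) → c = 0 ∧ d = 0) : False := by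
  simp only [lor, hp0, hq0] at h1 h2 h3
  have c3 : p 1 * q 2 - p 2 * q 1 = 0 := by
    apply pow_eq_zero_iff (two_ne_zero) |>.1
    linear_combination (q 1 ^ 2 + q 2 ^ 2) * h1 - (p 3 ^ 2) * h3
      - (p 1 * q 1 + p 2 * q 2 - p 3 * q 3) * h2
  have c2 : p 1 * q 3 - p 3 * q 1 = 0 := by
    apply pow_eq_zero_iff (two_ne_zero) |>.1
    linear_combination (q 1 ^ 2 + q 3 ^ 2) * h1 - (p 2 ^ 2) * h3
      - (p 1 * q 1 + p 3 * q 3 - p 2 * q 2) * h2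
  have c1 : p 2 * q 3 - p 3 * q 2 = 0 := by
    apply pow_eq_zero_iff (two_ne_zero) |>.1
    linear_combination (q 2 ^ 2 + q 3 ^ 2) * h1 - (p 1 ^ 2) * h3
      - (p 2 * q 2 + p 3 * q 3 - p 1 * q 1) * h2
  have k1 : p 1 = 0 := by
    have := hind (-q 1) (p 1) (by
      intro i
      fin_cases i
      · simp [hp0, hq0]
      · simp only [Fin.mk_one]; ring
      · simp only [Fin.reduceFinMk]; linear_combination c3
      · simp only [Fin.reduceFinMk]; linear_combination c2)
    exact this.2
  have k2 : p 2 = 0 := by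
    have := hind (-q 2) (p 2) (by
      intro i
      fin_cases i
      · simp [hp0, hq0]
      · simp only [Fin.mk_one]; linear_combination -c3
      · simp only [Fin.reduceFinMk]; ring
      · simp only [Fin.reduceFinMk]; linear_combination c1)
    exact this.2
  have k3 : p 3 = 0 := by
    have := hind (-q 3) (p 3) (by
      intro i
      fin_cases i
      · simp [hp0, hq0]
      · simp only [Fin.mk_one]; linear_combination -c2
      · simp only [Fin.reduceFinMk]; linear_combination -c1
      · simp only [Fin.reduceFinMk]; ring)
    exact this.2
  have := hind 1 0 (by
    intro i
    fin_cases i <;> simp [hp0, k1, k2, k3])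
  exact one_ne_zero this.1

lemma sign_const {U : Set ℂ} (hU : IsOpen U) (hUc : IsPreconnected U) (f g : ℂ → ℂ × ℂ)
    (hf : ContinuousOn f U) (hg : ContinuousOn g U) (h : ∀ z ∈ U, f z = 0 ∨ g z = 0)
    (hn : ∀ z ∈ U, ¬ (f z = 0 ∧ g z = 0)) : (∀ z ∈ U, f z = 0) ∨ (∀ z ∈ U, g z = 0) := by
  have o1 : IsOpen (U ∩ f ⁻¹' {0}ᶜ) := hf.isOpen_inter_preimage hU isOpen_compl_singleton
  have o2 : IsOpen (U ∩ g ⁻¹' {0}ᶜ) := hg.isOpen_inter_preimage hU isOpen_compl_singleton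
  rcases hUc.subset_or_subset o1 o2 (by
      rw [Set.disjoint_left]
      rintro z ⟨hz, h1⟩ ⟨-, h2⟩
      exact (h z hz).elim h1 h2) (by
      intro z hz
      by_cases h1 : f z = 0
      · exact Or.inr ⟨hz, fun h2 => hn z hz ⟨h1, h2⟩⟩
      · exact Or.inl ⟨hz, h1⟩) with h1 | h1
  · right
    intro z hz
    exact (h z hz).resolve_left (h1 hz).2
  · left
    intro z hz
    exact (h z hz).resolve_right (h1 hz).2

lemma mem_span_iff (J : ℂ) (p : Fin 4 → ℂ) :
    p ∈ Submodule.span ℂ ({![1, -1, 0, 0], ![0, 0, 1, J]} : Set (Fin 4 → ℂ)) ↔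
      p 1 = -p 0 ∧ p 3 = J * p 2 := by
  rw [Submodule.mem_span_pair]
  constructor
  · rintro ⟨a, b, rfl⟩
    simp
    ring
  · rintro ⟨h1, h2⟩
    refine ⟨p 0, p 2, ?_⟩
    ext i
    fin_cases i
    · simp
    · simp [h1]
    · simp
    · simp [h2, mul_comm]

def cc (u v : Fin 3 → ℝ) (s : Fin 4 → ℂ) : ℂ :=
  ((u 1 * v 2 - u 2 * v 1 : ℝ) : ℂ) * s 1 + ((u 2 * v 0 - u 0 * v 2 : ℝ) : ℂ) * s 2
    + ((u 0 * v 1 - u 1 * v 0 : ℝ) : ℂ) * s 3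

def dd (u : Fin 3 → ℝ) (s : Fin 4 → ℂ) : ℂ :=
  ((u 0 : ℝ) : ℂ) * s 1 + ((u 1 : ℝ) : ℂ) * s 2 + ((u 2 : ℝ) : ℂ) * s 3

lemma frame_mulVec (u v : Fin 3 → ℝ) (s : Fin 4 → ℂ) :
    (frame u v).map Complex.ofReal *ᵥ s = ![s 0, cc u v s, dd u s, dd v s] := by
  ext i
  fin_cases i <;> simp [frame, cc, dd, Matrix.mulVec, dotProduct, Fin.sum_univ_four]

lemma frame'_mulVec (u v : Fin 3 → ℝ) (s : Fin 4 → ℂ) :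
    (frame' u v).map Complex.ofReal *ᵥ s = ![s 0, -cc u v s, dd u s, -dd v s] := by
  ext i
  fin_cases i <;> simp [frame', cc, dd, Matrix.mulVec, dotProduct, Fin.sum_univ_four] <;> ring

lemma sqrt_div_analytic {U : Set ℂ} {f N : ℂ → ℝ} (hf : AnalyticOnNhd ℝ f U)
    (hN : AnalyticOnNhd ℝ N U) (hpos : ∀ z ∈ U, 0 < N z) :
    AnalyticOnNhd ℝ (fun z => f z / Real.sqrt (N z)) U := by
  intro z hz
  have hs : AnalyticAt ℝ (fun z => Real.sqrt (N z)) z := by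
    have : AnalyticAt ℝ (fun x => Real.sqrt x) (N z) :=
      (Real.contDiffAt_sqrt (hpos z hz).ne').analyticAt
    exact this.fun_comp (hN z hz)
  exact (hf z hz).fun_div hs (Real.sqrt_pos.2 (hpos z hz)).ne'

lemma frame_exists {U : Set ℂ} (hU : IsOpen U) (hUc : IsPreconnected U) (b1 b2 : ℂ → Fin 4 → ℂ)
    (ha1 : ∀ i, AnalyticOnNhd ℝ (fun z => b1 z i) U)
    (ha2 : ∀ i, AnalyticOnNhd ℝ (fun z => b2 z i) U)
    (hiso : ∀ z ∈ U, lor (b1 z) (b1 z) = 0 ∧ lor (b1 z) (b2 z) = 0 ∧ lor (b2 z) (b2 z) = 0)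
    (hind : ∀ z ∈ U, ∀ c d : ℂ, (∀ i, c * b1 z i + d * b2 z i = 0) → c = 0 ∧ d = 0) :
    ∃ A : ℂ → Matrix (Fin 4) (Fin 4) ℝ,
      (∀ i j, AnalyticOnNhd ℝ (fun z => A z i j) U) ∧ (∀ z ∈ U, SOplus13 (A z)) ∧
      ((∀ z ∈ U, ∀ s, s = b1 z ∨ s = b2 z → (A z).map Complex.ofReal *ᵥ s ∈
          Submodule.span ℂ ({![1, -1, 0, 0], ![0, 0, 1, Complex.I]} : Set (Fin 4 → ℂ))) ∨
       (∀ z ∈ U, ∀ s, s = b1 z ∨ s = b2 z → (A z).map Complex.ofReal *ᵥ s ∈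
          Submodule.span ℂ ({![1, -1, 0, 0], ![0, 0, 1, -Complex.I]} : Set (Fin 4 → ℂ)))) := by
  let t : Fin 4 → ℂ → ℂ := fun i z => b1 z 0 * b2 z i - b2 z 0 * b1 z i
  have hta : ∀ i, AnalyticOnNhd ℝ (t i) U := fun i =>
    ((ha1 0).mul (ha2 i)).sub ((ha2 0).mul (ha1 i))
  let x : Fin 3 → ℂ → ℝ := fun i z => (t i.succ z).re
  let y : Fin 3 → ℂ → ℝ := fun i z => (t i.succ z).im
  have hxa : ∀ i, AnalyticOnNhd ℝ (x i) U := fun i z hz =>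
    (Complex.reCLM.analyticAt _).fun_comp (hta i.succ z hz)
  have hya : ∀ i, AnalyticOnNhd ℝ (y i) U := fun i z hz =>
    (Complex.imCLM.analyticAt _).fun_comp (hta i.succ z hz)
  let N : ℂ → ℝ := fun z => x 0 z * x 0 z + x 1 z * x 1 z + x 2 z * x 2 z
  have hNa : AnalyticOnNhd ℝ N U :=
    (((hxa 0).mul (hxa 0)).add ((hxa 1).mul (hxa 1))).add ((hxa 2).mul (hxa 2))
  have htt : ∀ z ∈ U, t 1 z * t 1 z + t 2 z * t 2 z + t 3 z * t 3 z = 0 := by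
    intro z hz
    obtain ⟨h1, h2, h3⟩ := hiso z hz
    simp only [lor] at h1 h2 h3
    simp only [t]
    linear_combination b1 z 0 ^ 2 * h3 - 2 * b1 z 0 * b2 z 0 * h2 + b2 z 0 ^ 2 * h1
  have ht0 : ∀ z ∈ U, ¬ (b1 z 0 = 0 ∧ b2 z 0 = 0) := by
    rintro z hz ⟨h1, h2⟩
    obtain ⟨k1, k2, k3⟩ := hiso z hz
    exact no_plane3 _ _ h1 h2 k1 k2 k3 (hind z hz)
  have hre : ∀ z ∈ U, y 0 z * y 0 z + y 1 z * y 1 z + y 2 z * y 2 z = N z := by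
    intro z hz
    have := congrArg Complex.re (htt z hz)
    simp only [Complex.add_re, Complex.mul_re, Complex.zero_re] at this
    simp only [N, x, y, Fin.succ_zero_eq_one, Fin.succ_one_eq_two, Fin.reduceSucc]
    linear_combination -this
  have him : ∀ z ∈ U, x 0 z * y 0 z + x 1 z * y 1 z + x 2 z * y 2 z = 0 := by
    intro z hz
    have := congrArg Complex.im (htt z hz)
    simp only [Complex.add_im, Complex.mul_im, Complex.zero_im] at this
    simp only [x, y, Fin.succ_zero_eq_one, Fin.succ_one_eq_two, Fin.reduceSucc]
    linear_combination this / 2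
  have hNpos : ∀ z ∈ U, 0 < N z := by
    intro z hz
    by_contra hcon
    push Not at hcon
    have hx : ∀ i, x i z = 0 := by
      have e0 : x 0 z = 0 := by
        simp only [N] at hcon
        nlinarith [mul_self_nonneg (x 0 z), mul_self_nonneg (x 1 z), mul_self_nonneg (x 2 z)]
      have e1 : x 1 z = 0 := by
        simp only [N] at hcon
        nlinarith [mul_self_nonneg (x 0 z), mul_self_nonneg (x 1 z), mul_self_nonneg (x 2 z)]
      have e2 : x 2 z = 0 := by
        simp only [N] at hcon
        nlinarith [mul_self_nonneg (x 0 z), mul_self_nonneg (x 1 z), mul_self_nonneg (x 2 z)]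
      intro i
      fin_cases i
      exacts [e0, e1, e2]
    have hy : ∀ i, y i z = 0 := by
      have hcon' := (hre z hz).le.trans hcon
      have e0 : y 0 z = 0 := by
        nlinarith [mul_self_nonneg (y 0 z), mul_self_nonneg (y 1 z), mul_self_nonneg (y 2 z)]
      have e1 : y 1 z = 0 := by
        nlinarith [mul_self_nonneg (y 0 z), mul_self_nonneg (y 1 z), mul_self_nonneg (y 2 z)]
      have e2 : y 2 z = 0 := by
        nlinarith [mul_self_nonneg (y 0 z), mul_self_nonneg (y 1 z), mul_self_nonneg (y 2 z)]
      intro i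
      fin_cases i
      exacts [e0, e1, e2]
    have htz : ∀ i, t i z = 0 := by
      intro i
      refine Fin.cases ?_ (fun i => Complex.ext (hx i) (hy i)) i
      simp only [t]
      ring
    have := hind z hz (-b2 z 0) (b1 z 0) (fun i => by
      have := htz i
      simp only [t] at this
      linear_combination this)
    exact ht0 z hz ⟨this.2, neg_eq_zero.1 this.1⟩
  let u : ℂ → Fin 3 → ℝ := fun z i => x i z / Real.sqrt (N z)
  let v : ℂ → Fin 3 → ℝ := fun z i => y i z / Real.sqrt (N z)
  have hua : ∀ i, AnalyticOnNhd ℝ (fun z => u z i) U := fun i =>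
    sqrt_div_analytic (hxa i) hNa hNpos
  have hva : ∀ i, AnalyticOnNhd ℝ (fun z => v z i) U := fun i =>
    sqrt_div_analytic (hya i) hNa hNpos
  have huu : ∀ z ∈ U, u z 0 ^ 2 + u z 1 ^ 2 + u z 2 ^ 2 = 1 := by
    intro z hz
    have hs := Real.sq_sqrt (hNpos z hz).le
    have hN := (hNpos z hz).ne'
    simp only [u, div_pow, hs]
    field_simp
    simp only [N]
    ring
  have hvv : ∀ z ∈ U, v z 0 ^ 2 + v z 1 ^ 2 + v z 2 ^ 2 = 1 := by
    intro z hz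
    have hs := Real.sq_sqrt (hNpos z hz).le
    have hN := (hNpos z hz).ne'
    simp only [v, div_pow, hs]
    field_simp
    linear_combination hre z hz
  have huv : ∀ z ∈ U, u z 0 * v z 0 + u z 1 * v z 1 + u z 2 * v z 2 = 0 := by
    intro z hz
    have hN := (Real.sqrt_pos.2 (hNpos z hz)).ne'
    simp only [u, v]
    field_simp
    linear_combination him z hz
  have horth : ∀ z ∈ U, ∀ s, s = b1 z ∨ s = b2 z → dd (u z) s + Complex.I * dd (v z) s = 0 := by
    intro z hz s hs
    have hN : ((Real.sqrt (N z) : ℝ) : ℂ) ≠ 0 :=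
      Complex.ofReal_ne_zero.2 (Real.sqrt_pos.2 (hNpos z hz)).ne'
    have key : t 1 z * s 1 + t 2 z * s 2 + t 3 z * s 3 = 0 := by
      obtain ⟨h1, h2, h3⟩ := hiso z hz
      simp only [lor] at h1 h2 h3
      simp only [t]
      rcases hs with rfl | rfl
      · linear_combination b1 z 0 * h2 - b2 z 0 * h1
      · linear_combination b1 z 0 * h3 - b2 z 0 * h2
    have hd : ∀ i : Fin 3, t i.succ z = (x i z : ℂ) + Complex.I * (y i z : ℂ) := by
      intro i
      simp only [x, y]
      rw [mul_comm]
      exact (Complex.re_add_im _).symm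
    have d1 : t 1 z = _ := hd 0
    have d2 : t 2 z = _ := hd 1
    have d3 : t 3 z = _ := hd 2
    rw [d1, d2, d3] at key
    simp only [dd, u, v, Complex.ofReal_div]
    field_simp
    linear_combination key
  have hnull : ∀ z ∈ U, ∀ s s', (s = b1 z ∨ s = b2 z) → (s' = b1 z ∨ s' = b2 z) →
      cc (u z) (v z) s * cc (u z) (v z) s' = s 0 * s' 0 := by
    intro z hz s s' hs hs'
    have h0 : lor s s' = 0 := by
      obtain ⟨h1, h2, h3⟩ := hiso z hz
      rcases hs with rfl | rfl <;> rcases hs' with rfl | rfl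
      · exact h1
      · exact h2
      · rw [← h2]; simp only [lor]; ring
      · exact h3
    have h1 := lor_mulVec _ (map_form (frame_so _ _ (huu z hz) (hvv z hz) (huv z hz)).1) s s'
    rw [frame_mulVec, frame_mulVec, h0] at h1
    simp only [lor, Matrix.cons_val] at h1
    have k1 := horth z hz s hs
    have k2 := horth z hz s' hs'
    linear_combination h1 - dd (u z) s' * k1 + Complex.I * dd (v z) s * k2
      - dd (v z) s * dd (v z) s' * Complex.I_sq
  have hcca : ∀ b : ℂ → Fin 4 → ℂ, (∀ i, AnalyticOnNhd ℝ (fun z => b z i) U) →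
      ContinuousOn (fun z => cc (u z) (v z) (b z)) U := by
    intro b hb
    have hb1 := (hb 1).continuousOn
    have hb2 := (hb 2).continuousOn
    have hb3 := (hb 3).continuousOn
    have hu0 := (hua 0).continuousOn
    have hu1 := (hua 1).continuousOn
    have hu2 := (hua 2).continuousOn
    have hv0 := (hva 0).continuousOn
    have hv1 := (hva 1).continuousOn
    have hv2 := (hva 2).continuousOn
    have e : ∀ f : ℂ → ℝ, ContinuousOn f U → ContinuousOn (fun z => ((f z : ℝ) : ℂ)) U :=
      fun f hf => Complex.continuous_ofReal.comp_continuousOn hf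
    exact (((e _ ((hu1.mul hv2).sub (hu2.mul hv1))).mul hb1).add
      ((e _ ((hu2.mul hv0).sub (hu0.mul hv2))).mul hb2)).add
      ((e _ ((hu0.mul hv1).sub (hu1.mul hv0))).mul hb3)
  have hsign := sign_const hU hUc
    (fun z => (cc (u z) (v z) (b1 z) + b1 z 0, cc (u z) (v z) (b2 z) + b2 z 0))
    (fun z => (cc (u z) (v z) (b1 z) - b1 z 0, cc (u z) (v z) (b2 z) - b2 z 0))
    (((hcca b1 ha1).add (ha1 0).continuousOn).prodMk ((hcca b2 ha2).add (ha2 0).continuousOn))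
    (((hcca b1 ha1).sub (ha1 0).continuousOn).prodMk ((hcca b2 ha2).sub (ha2 0).continuousOn))
    (by
      intro z hz
      have h11 := hnull z hz (b1 z) (b1 z) (Or.inl rfl) (Or.inl rfl)
      have h12 := hnull z hz (b1 z) (b2 z) (Or.inl rfl) (Or.inr rfl)
      have h22 := hnull z hz (b2 z) (b2 z) (Or.inr rfl) (Or.inr rfl)
      generalize cc (u z) (v z) (b1 z) = p at *
      generalize cc (u z) (v z) (b2 z) = q at *
      simp only [Prod.mk_eq_zero]
      by_cases hb : b1 z 0 = 0
      · have hp : p = 0 := by simpa [hb] using h11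
        have : (q + b2 z 0) * (q - b2 z 0) = 0 := by linear_combination h22
        rcases mul_eq_zero.1 this with h | h
        · left; exact ⟨by simp [hp, hb], h⟩
        · right; exact ⟨by simp [hp, hb], h⟩
      · have : (p + b1 z 0) * (p - b1 z 0) = 0 := by linear_combination h11
        rcases mul_eq_zero.1 this with h | h
        · left
          refine ⟨h, (mul_eq_zero.1 (?_ : b1 z 0 * (q + b2 z 0) = 0)).resolve_left hb⟩
          linear_combination -h12 + q * h
        · right
          refine ⟨h, (mul_eq_zero.1 (?_ : b1 z 0 * (q - b2 z 0) = 0)).resolve_left hb⟩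
          linear_combination h12 - q * h)
    (by
      rintro z hz ⟨h1, h2⟩
      simp only [Prod.mk_eq_zero] at h1 h2
      exact ht0 z hz ⟨by linear_combination (h1.1 - h2.1) / 2,
        by linear_combination (h1.2 - h2.2) / 2⟩)
  have w1 := ((hua 1).mul (hva 2)).sub ((hua 2).mul (hva 1))
  have w2 := ((hua 2).mul (hva 0)).sub ((hua 0).mul (hva 2))
  have w3 := ((hua 0).mul (hva 1)).sub ((hua 1).mul (hva 0))
  rcases hsign with hsg | hsg
  · refine ⟨fun z => frame (u z) (v z), ?_, ?_, Or.inl ?_⟩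
    · intro i j
      fin_cases i <;> fin_cases j
      exacts [analyticOnNhd_const, analyticOnNhd_const, analyticOnNhd_const, analyticOnNhd_const,
        analyticOnNhd_const, w1, w2, w3, analyticOnNhd_const, hua 0, hua 1, hua 2,
        analyticOnNhd_const, hva 0, hva 1, hva 2]
    · exact fun z hz => frame_so _ _ (huu z hz) (hvv z hz) (huv z hz)
    · intro z hz s hs
      rw [mem_span_iff, frame_mulVec]
      have h1 := hsg z hz
      simp only [Prod.mk_eq_zero] at h1
      have k := horth z hz s hs
      simp only [Matrix.cons_val]
      constructor
      · rcases hs with rfl | rfl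
        · linear_combination h1.1
        · linear_combination h1.2
      · linear_combination -Complex.I * k + dd (v z) s * Complex.I_sq
  · refine ⟨fun z => frame' (u z) (v z), ?_, ?_, Or.inr ?_⟩
    · intro i j
      fin_cases i <;> fin_cases j
      exacts [analyticOnNhd_const, analyticOnNhd_const, analyticOnNhd_const, analyticOnNhd_const,
        analyticOnNhd_const, w1.neg, w2.neg, w3.neg, analyticOnNhd_const, hua 0, hua 1, hua 2,
        analyticOnNhd_const, (hva 0).neg, (hva 1).neg, (hva 2).neg]
    · exact fun z hz => frame'_so _ _ (huu z hz) (hvv z hz) (huv z hz)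
    · intro z hz s hs
      rw [mem_span_iff, frame'_mulVec]
      have h1 := hsg z hz
      simp only [Prod.mk_eq_zero] at h1
      have k := horth z hz s hs
      simp only [Matrix.cons_val]
      constructor
      · rcases hs with rfl | rfl
        · linear_combination -h1.1
        · linear_combination -h1.2
      · linear_combination Complex.I * k - dd (v z) s * Complex.I_sq

lemma col_form {m : ℕ} (B : Matrix (Fin 4) (Fin m) ℂ) :
    Bᵀ * I13C * B = 0 ↔ ∀ j k, lor (fun i => B i j) (fun i => B i k) = 0 := by
  have h : ∀ j k, (Bᵀ * I13C * B) j k = lor (fun i => B i j) (fun i => B i k) := by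
    intro j k
    rw [I13C, Matrix.mul_apply]
    simp only [Matrix.mul_diagonal, Fin.sum_univ_four, Matrix.transpose_apply, Matrix.cons_val, lor]
    ring
  constructor
  · intro h0 j k
    rw [← h, h0]
    rfl
  · intro h0
    ext j k
    rw [h, h0]
    rfl

lemma back_dir {m : ℕ} (A : Matrix (Fin 4) (Fin 4) ℝ) (hA : SOplus13 A)
    (B : Matrix (Fin 4) (Fin m) ℂ) (J : ℂ) (hJ : J * J = -1)
    (h : ∀ j, (fun i => (A.map Complex.ofReal * B) i j) ∈
      Submodule.span ℂ ({![1, -1, 0, 0], ![0, 0, 1, J]} : Set (Fin 4 → ℂ))) :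
    Bᵀ * I13C * B = 0 := by
  rw [col_form]
  intro j k
  rw [← lor_mulVec _ (map_form hA.1)]
  have hj : A.map Complex.ofReal *ᵥ (fun i => B i j) ∈
      Submodule.span ℂ ({![1, -1, 0, 0], ![0, 0, 1, J]} : Set (Fin 4 → ℂ)) := h j
  have hk : A.map Complex.ofReal *ᵥ (fun i => B i k) ∈
      Submodule.span ℂ ({![1, -1, 0, 0], ![0, 0, 1, J]} : Set (Fin 4 → ℂ)) := h k
  rw [mem_span_iff] at hj hk
  simp only [lor, hj.1, hj.2, hk.1, hk.2]
  generalize A.map Complex.ofReal *ᵥ (fun i => B i j) = p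
  generalize A.map Complex.ofReal *ᵥ (fun i => B i k) = q
  linear_combination p 2 * q 2 * hJ

/-- Theorem 3.4: for a not-identically-zero real analytic `B₁ : U → Mat(4×n,ℂ)` on a
contractible open `U ⊆ ℂ`, factoring as `B₁ = S₁ R₁ S₂` with `R₁` holomorphic,
`S₁` complex-Lorentz-orthogonal of determinant 1 and `S₂` complex-orthogonal of
determinant 1, the isotropy condition `B₁ᵀ I₁,₃ B₁ = 0` holds on `U` iff there is
a real analytic map `𝔸 : U → SO⁺(1,3)` taking all columns of `𝔸 B₁` into
`span_ℂ{(1,-1,0,0)ᵀ, (0,0,1,i)ᵀ}`, or all into `span_ℂ{(1,-1,0,0)ᵀ, (0,0,1,-i)ᵀ}`. -/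
theorem stmt1 (n : ℕ) (U : Set ℂ) (hUo : IsOpen U) (hUc : ContractibleSpace U)
    (B₁ R₁ : ℂ → Matrix (Fin 4) (Fin n) ℂ)
    (S₁ : ℂ → Matrix (Fin 4) (Fin 4) ℂ)
    (S₂ : ℂ → Matrix (Fin n) (Fin n) ℂ)
    (hB_an : ∀ i j, AnalyticOn ℝ (fun z => B₁ z i j) U)
    (hB_ne : ∃ z ∈ U, B₁ z ≠ 0)
    (hR_hol : ∀ i j, AnalyticOn ℂ (fun z => R₁ z i j) U)
    (hS₁_an : ∀ i j, AnalyticOn ℝ (fun z => S₁ z i j) U)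
    (hS₂_an : ∀ i j, AnalyticOn ℝ (fun z => S₂ z i j) U)
    (hS₁ : ∀ z ∈ U, (S₁ z)ᵀ * I13C * S₁ z = I13C ∧ (S₁ z).det = 1)
    (hS₂ : ∀ z ∈ U, (S₂ z)ᵀ * S₂ z = 1 ∧ (S₂ z).det = 1)
    (hfact : ∀ z ∈ U, B₁ z = S₁ z * R₁ z * S₂ z) :
    (∀ z ∈ U, (B₁ z)ᵀ * I13C * B₁ z = 0) ↔
      ∃ A : ℂ → Matrix (Fin 4) (Fin 4) ℝ,
        (∀ i j, AnalyticOn ℝ (fun z => A z i j) U) ∧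
        (∀ z ∈ U, SOplus13 (A z)) ∧
        ((∀ z ∈ U, ∀ j, (fun i => ((A z).map Complex.ofReal * B₁ z) i j) ∈
            Submodule.span ℂ ({![1, -1, 0, 0], ![0, 0, 1, Complex.I]} :
              Set (Fin 4 → ℂ))) ∨
         (∀ z ∈ U, ∀ j, (fun i => ((A z).map Complex.ofReal * B₁ z) i j) ∈
            Submodule.span ℂ ({![1, -1, 0, 0], ![0, 0, 1, -Complex.I]} :
              Set (Fin 4 → ℂ)))) := by
  constructor
  · intro hB
    have hpre : IsPreconnected U := by
      rw [isPreconnected_iff_preconnectedSpace]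
      infer_instance
    have hRn : ∀ i j, AnalyticOnNhd ℂ (fun z => R₁ z i j) U := fun i j =>
      hUo.analyticOn_iff_analyticOnNhd.1 (hR_hol i j)
    have hSn : ∀ i j, AnalyticOnNhd ℝ (fun z => S₁ z i j) U := fun i j =>
      hUo.analyticOn_iff_analyticOnNhd.1 (hS₁_an i j)
    have hRiso : ∀ z ∈ U, (R₁ z)ᵀ * I13C * R₁ z = 0 := by
      intro z hz
      have h1 : S₂ z * (S₂ z)ᵀ = 1 := mul_eq_one_comm.1 (hS₂ z hz).1
      have h2 := hB z hz
      have h3 : (B₁ z)ᵀ * I13C * B₁ z = (S₂ z)ᵀ * ((R₁ z)ᵀ * I13C * R₁ z) * S₂ z := by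
        conv_rhs => rw [← (hS₁ z hz).1]
        rw [hfact z hz, Matrix.transpose_mul, Matrix.transpose_mul]
        simp only [Matrix.mul_assoc]
      rw [h2] at h3
      calc (R₁ z)ᵀ * I13C * R₁ z
          = (S₂ z * (S₂ z)ᵀ) * ((R₁ z)ᵀ * I13C * R₁ z) * (S₂ z * (S₂ z)ᵀ) := by
            rw [h1, Matrix.one_mul, Matrix.mul_one]
        _ = S₂ z * ((S₂ z)ᵀ * ((R₁ z)ᵀ * I13C * R₁ z) * S₂ z) * (S₂ z)ᵀ := by
            simp only [Matrix.mul_assoc]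
        _ = 0 := by rw [← h3]; simp
    have hne : ∃ z ∈ U, ∃ i j, R₁ z i j ≠ 0 := by
      obtain ⟨z, hz, h⟩ := hB_ne
      refine ⟨z, hz, ?_⟩
      by_contra hcon
      push Not at hcon
      apply h
      have : R₁ z = 0 := by
        ext i j
        exact hcon i j
      rw [hfact z hz, this]
      simp
    obtain ⟨r1, r2, hr1, hr2, hiso, hind, hsp⟩ := plane_exists hUo hpre R₁ hRn hne
      (fun z hz => (col_form _).1 (hRiso z hz))
    have hban : ∀ r : ℂ → Fin 4 → ℂ, (∀ i, AnalyticOnNhd ℂ (fun z => r z i) U) →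
        ∀ i, AnalyticOnNhd ℝ (fun z => (S₁ z *ᵥ r z) i) U := by
      intro r hr i z hz
      have : (fun z => (S₁ z *ᵥ r z) i) = fun z => ∑ k, S₁ z i k * r z k := rfl
      rw [this]
      exact Finset.analyticAt_fun_sum _ (fun k _ => (hSn i k z hz).mul
        ((hr k z hz).restrictScalars))
    obtain ⟨A, hAan, hASO, hA⟩ := frame_exists hUo hpre (fun z => S₁ z *ᵥ r1 z)
      (fun z => S₁ z *ᵥ r2 z) (hban r1 hr1) (hban r2 hr2)
      (by
        intro z hz
        simp only [lor_mulVec _ (hS₁ z hz).1]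
        exact hiso z hz)
      (by
        intro z hz c d h
        apply hind z hz
        have h0 : S₁ z *ᵥ (c • r1 z + d • r2 z) = 0 := by
          rw [Matrix.mulVec_add, Matrix.mulVec_smul, Matrix.mulVec_smul]
          ext i
          exact h i
        have h1 : IsUnit (S₁ z).det := by rw [(hS₁ z hz).2]; exact isUnit_one
        have h2 : c • r1 z + d • r2 z = 0 := by
          have := congrArg (fun w => (S₁ z)⁻¹ *ᵥ w) h0
          simpa [Matrix.mulVec_mulVec, Matrix.nonsing_inv_mul _ h1] using this
        intro i
        exact congrFun h2 i)
    refine ⟨A, fun i j => (hAan i j).analyticOn, hASO, ?_⟩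
    have fin : ∀ z ∈ U, ∀ W : Submodule ℂ (Fin 4 → ℂ),
        (∀ s, s = S₁ z *ᵥ r1 z ∨ s = S₁ z *ᵥ r2 z → (A z).map Complex.ofReal *ᵥ s ∈ W) →
        ∀ j, (fun i => ((A z).map Complex.ofReal * B₁ z) i j) ∈ W := by
      intro z hz W hW j
      have hcol : ∀ k, (A z).map Complex.ofReal *ᵥ (S₁ z *ᵥ (fun i => R₁ z i k)) ∈ W := by
        intro k
        obtain ⟨c, d, hcd⟩ := hsp z hz k
        have : (fun i => R₁ z i k) = c • r1 z + d • r2 z := funext hcd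
        rw [this, Matrix.mulVec_add, Matrix.mulVec_smul, Matrix.mulVec_smul, Matrix.mulVec_add,
          Matrix.mulVec_smul, Matrix.mulVec_smul]
        exact W.add_mem (W.smul_mem _ (hW _ (Or.inl rfl))) (W.smul_mem _ (hW _ (Or.inr rfl)))
      have heq : (fun i => ((A z).map Complex.ofReal * B₁ z) i j) =
          ∑ k, S₂ z k j • ((A z).map Complex.ofReal *ᵥ (S₁ z *ᵥ (fun i => R₁ z i k))) := by
        ext i
        rw [hfact z hz, ← Matrix.mul_assoc, ← Matrix.mul_assoc, Matrix.mul_apply,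
          Finset.sum_apply]
        refine Finset.sum_congr rfl (fun k _ => ?_)
        rw [Matrix.mulVec_mulVec, Pi.smul_apply, smul_eq_mul, mul_comm]
        rfl
      rw [heq]
      exact W.sum_mem (fun k _ => W.smul_mem _ (hcol k))
    rcases hA with hA | hA
    · exact Or.inl (fun z hz => fin z hz _ (hA z hz))
    · exact Or.inr (fun z hz => fin z hz _ (hA z hz))
  · rintro ⟨A, -, hSO, h | h⟩ z hz
    · exact back_dir (A z) (hSO z hz) _ Complex.I Complex.I_mul_I (h z hz)
    · exact back_dir (A z) (hSO z hz) _ (-Complex.I) (by simp) (h z hz)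
end
end

section
/- Every nonzero complex null vector b ∈ ℂ⁴ (i.e. b ≠ 0 with bᵀ I₁,₃ b = 0) can be mapped by a matrix in SO⁺(1,3) into one of the complex lines ℂ·(1,−1,0,0)ᵀ, ℂ·(0,0,1,i)ᵀ, or ℂ·(0,0,1,−i)ᵀ: there exists A ∈ SO⁺(1,3) and λ ∈ ℂ such that A·b = λ·(1,−1,0,0)ᵀ or A·b = λ·(0,0,1,i)ᵀ or A·b = λ·(0,0,1,−i)ᵀ. -/
open Matrix Complex

noncomputable section

/-- The family of matrices used. -/
def mkA (c s e0 e1 e2 f0 f1 f2 : ℝ) : Matrix (Fin 4) (Fin 4) ℝ :=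
  !![c, -s*e0, -s*e1, -s*e2;
     0, e1*f2-e2*f1, e2*f0-e0*f2, e0*f1-e1*f0;
     -s, c*e0, c*e1, c*e2;
     0, f0, f1, f2]

lemma mkA_mem (c s e0 e1 e2 f0 f1 f2 : ℝ) (hc : 0 < c) (h : c^2-s^2=1)
    (he : e0^2+e1^2+e2^2=1) (hf : f0^2+f1^2+f2^2=1) (hef : e0*f0+e1*f1+e2*f2=0) :
    SOplus13 (mkA c s e0 e1 e2 f0 f1 f2) := by
  have hg : (e1*f2-e2*f1)^2+(e2*f0-e0*f2)^2+(e0*f1-e1*f0)^2 = 1 := by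
    linear_combination (f0^2+f1^2+f2^2) * he + hf - (e0*f0+e1*f1+e2*f2) * hef
  have hI : I13 * I13 = 1 := by
    ext i j
    fin_cases i <;> fin_cases j <;> simp [I13]
  refine ⟨?_, ?_, ?_⟩
  · have key : mkA c s e0 e1 e2 f0 f1 f2 * (I13 * (mkA c s e0 e1 e2 f0 f1 f2)ᵀ * I13) = 1 := by
      have : mkA c s e0 e1 e2 f0 f1 f2 * I13 * (mkA c s e0 e1 e2 f0 f1 f2)ᵀ = I13 := by
        ext i j
        fin_cases i <;> fin_cases j <;>
          simp [mkA, I13, Matrix.mul_apply, Fin.sum_univ_four, Matrix.vecMul_diagonal]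
        · linear_combination s^2*he - h
        · ring
        · linear_combination -c*s*he
        · linear_combination -s*hef
        · ring
        · linear_combination hg
        · ring
        · ring
        · linear_combination -c*s*he
        · ring
        · linear_combination c^2*he + h
        · linear_combination c*hef
        · linear_combination -s*hef
        · ring
        · linear_combination c*hef
        · linear_combination hf
      rw [← Matrix.mul_assoc, ← Matrix.mul_assoc, this, hI]
    rw [mul_eq_one_comm] at key
    generalize mkA c s e0 e1 e2 f0 f1 f2 = A at key
    calc Aᵀ * I13 * A = (I13 * I13) * (Aᵀ * I13 * A) := by rw [hI, Matrix.one_mul]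
      _ = I13 * (I13 * Aᵀ * I13 * A) := by simp only [Matrix.mul_assoc]
      _ = I13 := by rw [key, Matrix.mul_one]
  · simp [mkA, Matrix.det_succ_row_zero, Fin.sum_univ_succ, Fin.succAbove]
    linear_combination h + (c^2-s^2) * hg
  · simpa [mkA] using hc

lemma mkA_mulVec (c s e0 e1 e2 f0 f1 f2 : ℝ) (b : Fin 4 → ℂ) :
    ((mkA c s e0 e1 e2 f0 f1 f2).map Complex.ofReal).mulVec b =
     ![c * b 0 - s * (e0 * b 1 + e1 * b 2 + e2 * b 3),
       (e1*f2-e2*f1) * b 1 + (e2*f0-e0*f2) * b 2 + (e0*f1-e1*f0) * b 3,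
       -s * b 0 + c * (e0 * b 1 + e1 * b 2 + e2 * b 3),
       f0 * b 1 + f1 * b 2 + f2 * b 3] := by
  ext i
  fin_cases i <;> simp [mkA, Matrix.mulVec, dotProduct, Fin.sum_univ_four] <;> ring

lemma exists_frame (u0 u1 u2 : ℝ) (hu : u0^2+u1^2+u2^2=1) :
    ∃ e0 e1 e2 f0 f1 f2 : ℝ, e0^2+e1^2+e2^2=1 ∧ f0^2+f1^2+f2^2=1 ∧ e0*f0+e1*f1+e2*f2=0 ∧
      e1*f2-e2*f1 = -u0 ∧ e2*f0-e0*f2 = -u1 ∧ e0*f1-e1*f0 = -u2 := by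
  obtain ⟨e0, e1, e2, he, heu⟩ : ∃ e0 e1 e2 : ℝ, e0^2+e1^2+e2^2=1 ∧ e0*u0+e1*u1+e2*u2=0 := by
    by_cases h : u1^2+u2^2 = 0
    · have h1 : u1 = 0 := by nlinarith [sq_nonneg u1, sq_nonneg u2]
      exact ⟨0, 1, 0, by norm_num, by simp [h1]⟩
    · have hp : 0 ≤ u1^2+u2^2 := by positivity
      have hr := Real.sq_sqrt hp
      have hr0 : Real.sqrt (u1^2+u2^2) ≠ 0 := by
        intro h0; rw [h0] at hr; apply h; linarith
      generalize Real.sqrt (u1^2+u2^2) = r at hr hr0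
      refine ⟨0, -u2/r, u1/r, ?_, ?_⟩
      · field_simp; linarith
      · field_simp; ring
  refine ⟨e0, e1, e2, -(u1*e2-u2*e1), -(u2*e0-u0*e2), -(u0*e1-u1*e0), he, ?_, ?_, ?_, ?_, ?_⟩
  · linear_combination (u0^2+u1^2+u2^2)*he + hu - (e0*u0+e1*u1+e2*u2)*heu
  · ring
  · linear_combination -u0*he + e0*heu
  · linear_combination -u1*he + e1*heu
  · linear_combination -u2*he + e2*heu

/-- Every nonzero complex null vector in `ℂ⁴` can be mapped by a matrix in `SO⁺(1,3)`
into one of the complex lines `ℂ·(1,-1,0,0)ᵀ`, `ℂ·(0,0,1,i)ᵀ` or `ℂ·(0,0,1,-i)ᵀ`. -/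
theorem stmt2 (b : Fin 4 → ℂ) (hb : b ≠ 0)
    (hnull : dotProduct b (I13C.mulVec b) = 0) :
    ∃ (A : Matrix (Fin 4) (Fin 4) ℝ) (lam : ℂ), SOplus13 A ∧
      ((A.map Complex.ofReal).mulVec b = lam • ![1, -1, 0, 0] ∨
       (A.map Complex.ofReal).mulVec b = lam • ![0, 0, 1, Complex.I] ∨
       (A.map Complex.ofReal).mulVec b = lam • ![0, 0, 1, -Complex.I]) := by
  have hn : -(b 0)^2 + (b 1)^2 + (b 2)^2 + (b 3)^2 = 0 := by
    simp [I13C, dotProduct, Fin.sum_univ_four, Matrix.mulVec_diagonal] at hnull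
    linear_combination hnull
  -- common final step
  have main : ∀ (t z : ℂ) (u0 u1 u2 w0 w1 w2 p q a : ℝ), b 0 = z * a →
      b 1 = z * (u0 + I * w0) → b 2 = z * (u1 + I * w1) → b 3 = z * (u2 + I * w2) →
      0 < p → 0 < q → u0^2+u1^2+u2^2 = p^2 → w0^2+w1^2+w2^2 = q^2 →
      u0*w0+u1*w1+u2*w2 = 0 → p^2 - q^2 = a^2 →
      ∃ (A : Matrix (Fin 4) (Fin 4) ℝ) (lam : ℂ), SOplus13 A ∧
        (A.map Complex.ofReal).mulVec b = lam • ![0, 0, 1, Complex.I] := by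
    intro t z u0 u1 u2 w0 w1 w2 p q a h0 h1 h2 h3 hp hq hu hw huw hpq
    refine ⟨mkA (p/q) (a/q) (u0/p) (u1/p) (u2/p) (w0/q) (w1/q) (w2/q), z * q,
      mkA_mem _ _ _ _ _ _ _ _ (by positivity) ?_ ?_ ?_ ?_, ?_⟩
    · field_simp; linarith
    · field_simp; linarith
    · field_simp; linarith
    · field_simp; linarith
    · have hpc : (p:ℂ) ≠ 0 := by exact_mod_cast hp.ne'
      have hqc : (q:ℂ) ≠ 0 := by exact_mod_cast hq.ne'
      have huc : (u0:ℂ)^2+u1^2+u2^2 = p^2 := by exact_mod_cast hu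
      have hwc : (w0:ℂ)^2+w1^2+w2^2 = q^2 := by exact_mod_cast hw
      have huwc : (u0:ℂ)*w0+u1*w1+u2*w2 = 0 := by exact_mod_cast huw
      have hpqc : (p:ℂ)^2-q^2 = a^2 := by exact_mod_cast hpq
      rw [mkA_mulVec, h0, h1, h2, h3]
      ext i
      fin_cases i <;> simp <;> field_simp
      · linear_combination -z*a*huc - I*z*a*huwc
      · ring
      · linear_combination z*huc + z*I*huwc + z*hpqc
      · linear_combination z*huwc + z*I*hwc
  by_cases hb0 : b 0 = 0
  · have hre := congrArg Complex.re hn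
    have him := congrArg Complex.im hn
    simp [hb0, pow_two] at hre him
    have hpos : 0 < (b 1).re^2 + (b 2).re^2 + (b 3).re^2 := by
      by_contra hcon
      apply hb
      have a1 := sq_nonneg (b 1).re
      have a2 := sq_nonneg (b 2).re
      have a3 := sq_nonneg (b 3).re
      have c1 := sq_nonneg (b 1).im
      have c2 := sq_nonneg (b 2).im
      have c3 := sq_nonneg (b 3).im
      have d1 : (b 1).re = 0 := by nlinarith
      have d2 : (b 2).re = 0 := by nlinarith
      have d3 : (b 3).re = 0 := by nlinarith
      have d4 : (b 1).im = 0 := by nlinarith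
      have d5 : (b 2).im = 0 := by nlinarith
      have d6 : (b 3).im = 0 := by nlinarith
      ext i
      fin_cases i
      · simpa using hb0
      · exact Complex.ext d1 d4
      · exact Complex.ext d2 d5
      · exact Complex.ext d3 d6
    have hsq := Real.sq_sqrt hpos.le
    have hsp := Real.sqrt_pos.2 hpos
    obtain ⟨A, l, hA, h⟩ := main 0 1 (b 1).re (b 2).re (b 3).re (b 1).im (b 2).im (b 3).im _ _ 0
      (by simp [hb0])
      (by rw [one_mul, mul_comm]; exact (Complex.re_add_im _).symm)
      (by rw [one_mul, mul_comm]; exact (Complex.re_add_im _).symm)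
      (by rw [one_mul, mul_comm]; exact (Complex.re_add_im _).symm)
      hsp hsp hsq.symm (by rw [hsq]; linarith) (by linarith) (by ring)
    exact ⟨A, l, hA, Or.inr (Or.inl h)⟩
  · obtain ⟨v1, hv1⟩ : ∃ v, b 1 = b 0 * v := ⟨b 1 / b 0, by field_simp⟩
    obtain ⟨v2, hv2⟩ : ∃ v, b 2 = b 0 * v := ⟨b 2 / b 0, by field_simp⟩
    obtain ⟨v3, hv3⟩ : ∃ v, b 3 = b 0 * v := ⟨b 3 / b 0, by field_simp⟩
    have hn2 : v1^2+v2^2+v3^2 - 1 = 0 := by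
      rw [hv1, hv2, hv3] at hn
      apply mul_left_cancel₀ (pow_ne_zero 2 hb0)
      linear_combination hn
    have hre := congrArg Complex.re hn2
    have him := congrArg Complex.im hn2
    simp [pow_two] at hre him
    by_cases hpos : 0 < v1.im^2 + v2.im^2 + v3.im^2
    · have hsq := Real.sq_sqrt hpos.le
      have hsp := Real.sqrt_pos.2 hpos
      have hpos' : 0 < v1.re^2 + v2.re^2 + v3.re^2 := by nlinarith
      have hsq' := Real.sq_sqrt hpos'.le
      have hsp' := Real.sqrt_pos.2 hpos'
      obtain ⟨A, l, hA, h⟩ := main 0 (b 0) v1.re v2.re v3.re v1.im v2.im v3.im _ _ 1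
        (by simp)
        (by rw [mul_comm I, Complex.re_add_im]; exact hv1)
        (by rw [mul_comm I, Complex.re_add_im]; exact hv2)
        (by rw [mul_comm I, Complex.re_add_im]; exact hv3)
        hsp' hsp hsq'.symm hsq.symm (by linarith) (by rw [hsq, hsq']; linarith)
      exact ⟨A, l, hA, Or.inr (Or.inl h)⟩
    · have c1 := sq_nonneg v1.im
      have c2 := sq_nonneg v2.im
      have c3 := sq_nonneg v3.im
      have d1 : v1.im = 0 := by nlinarith
      have d2 : v2.im = 0 := by nlinarith
      have d3 : v3.im = 0 := by nlinarith
      have e1 : v1 = (v1.re : ℂ) := Complex.ext rfl (by simpa using d1)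
      have e2 : v2 = (v2.re : ℂ) := Complex.ext rfl (by simpa using d2)
      have e3 : v3 = (v3.re : ℂ) := Complex.ext rfl (by simpa using d3)
      rw [d1, d2, d3] at hre
      rw [e1] at hv1
      rw [e2] at hv2
      rw [e3] at hv3
      generalize v1.re = x at *
      generalize v2.re = y at *
      generalize v3.re = w at *
      have hx : x^2+y^2+w^2 = 1 := by linarith
      obtain ⟨e0, e1, e2, f0, f1, f2, he, hf, hef, g0, g1, g2⟩ := exists_frame x y w hx
      refine ⟨mkA 1 0 e0 e1 e2 f0 f1 f2, b 0,
        mkA_mem _ _ _ _ _ _ _ _ one_pos (by norm_num) he hf hef, Or.inl ?_⟩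
      have k0 : x = -(e1*f2-e2*f1) := by linarith
      have k1 : y = -(e2*f0-e0*f2) := by linarith
      have k2 : w = -(e0*f1-e1*f0) := by linarith
      have hxc : (x:ℂ)^2+y^2+w^2 = 1 := by exact_mod_cast hx
      have k0c : (x:ℂ) = -(e1*f2-e2*f1) := by exact_mod_cast k0
      have k1c : (y:ℂ) = -(e2*f0-e0*f2) := by exact_mod_cast k1
      have k2c : (w:ℂ) = -(e0*f1-e1*f0) := by exact_mod_cast k2
      rw [mkA_mulVec, hv1, hv2, hv3]
      ext i
      fin_cases i <;> simp
      · linear_combination -b 0 * hxc + b 0 * x * k0c + b 0 * y * k1c + b 0 * w * k2c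
      · rw [k0c, k1c, k2c]; ring
      · rw [k0c, k1c, k2c]; ring
end
end
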